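/- Let r, n ≥ 1 be integers and let A ∈ M_{rn}(ℂ) be a positive semidefinite contraction (0 ≤ A ≤ I) all of whose diagonal entries are at most α ≥ 0. Then there exists a partition [rn] = S_1 ⊔ S_2 ⊔ ⋯ ⊔ S_r with |S_k| = n for every k ∈ [r], such that for every k ∈ [r] the largest eigenvalue of the principal submatrix A(S_k) is at most 4·r^{−1/4} + α. -/

import Mathlib

open ComplexOrder

/-- the principal submatrix `A(S)` -/
def subMat {m : ℕ} (A : Matrix (Fin m) (Fin m) ℂ) (S : Finset (Fin m)) :
    Matrix {x // x ∈ S} {x // x ∈ S} ℂ :=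
  A.submatrix Subtype.val Subtype.val

/-!
Write `A = Bᴴ B`, and let `k ≈ √r / 2`. The barrier method of Marcus, Spielman and Srivastava
selects one vector from each of finitely many finite families so that the Hermitian form of the
selection exceeds that of a prescribed convex combination only in a controlled way. Here it works
with `det (∑ zₐ vₐ vₐᴴ)`, which is real stable once a basis is adjoined to the `vₐ`: directional
logarithmic derivatives of real stable polynomials are monotone and convex above the zeros,
because they have partial fraction expansions with nonnegative residues, so the barrier can be
pushed through the operators `1 - ∂_w`, one for each family.

Applied to `k` copies of the columns of `B`, the selection theorem colours the index set by `k`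
colours such that each class has largest eigenvalue at most `α + 1 / k + (1 + α) / √k`. To
equalize the sizes, cut each class but the largest into sets of size `n` and a remainder `L` of
less than `n` elements, and complete `L` to size `n` by a set `R` taken from the largest class.
Since `2 A - 1` is a contraction, the rows of the block of `A` between `L` and the largest class
are small on average, and a second application of the selection theorem finds `R` such that the
block between `L` and `R` has norm at most `r ^ (-1 / 4)`, which is all that the union adds to
the eigenvalue bound. The largest class has enough elements for all the remainders, and what is
left of it has a size divisible by `n`.
-/

open scoped ComplexConjugate

theorem le_of_continuous_of_forall_gt {f g : ℝ → ℝ} (hf : Continuous f) (hg : Continuous g) {a : ℝ}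
    (h : ∀ t, a < t → f t ≤ g t) : f a ≤ g a :=
  le_on_closure (s := Set.Ioi a) h hf.continuousOn hg.continuousOn (by simp)

section Dissipative

open Polynomial

variable {D p g Q : ℂ[X]} {ρ : ℂ} {m : ℕ}

theorem exists_im_pos_and_im_mul_pow_pos {c : ℂ} (hc : c ≠ 0) (hm : 2 ≤ m) :
    ∃ u : ℂ, 0 < u.im ∧ 0 < (c * u ^ m).im := by
  obtain ⟨ψ, hψ, hψ', hsin⟩ : ∃ ψ, 0 < ψ ∧ ψ < 2 * Real.pi ∧ 0 < Real.sin (c.arg + ψ) := by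
    have hpi := Real.pi_pos
    rcases lt_or_ge c.arg (Real.pi / 2) with h | h
    · exact ⟨Real.pi / 2 - c.arg, by linarith, by linarith [c.neg_pi_lt_arg], by simp⟩
    · refine ⟨Real.pi / 4 + 2 * Real.pi - c.arg, by linarith [c.arg_le_pi], by linarith, ?_⟩
      rw [add_sub_cancel, Real.sin_add_two_pi]
      exact Real.sin_pos_of_pos_of_lt_pi (by linarith) (by linarith)
  have hm2 : (2 : ℝ) ≤ m := mod_cast hm
  have hm0 : (m : ℂ) ≠ 0 := mod_cast (by lia : m ≠ 0)
  refine ⟨Complex.exp ((ψ / m : ℝ) * Complex.I), ?_, ?_⟩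
  · rw [Complex.exp_ofReal_mul_I_im]
    refine Real.sin_pos_of_pos_of_lt_pi (by positivity) ?_
    rw [div_lt_iff₀ (by linarith)]
    nlinarith [Real.pi_pos]
  · have hpolar : c * Complex.exp ((ψ / m : ℝ) * Complex.I) ^ m =
        (‖c‖ : ℝ) * Complex.exp ((c.arg + ψ : ℝ) * Complex.I) := by
      nth_rw 1 [← c.norm_mul_exp_arg_mul_I]
      rw [← Complex.exp_nat_mul, mul_assoc, ← Complex.exp_add]
      congr 2
      push_cast
      field_simp
    rw [hpolar, Complex.im_ofReal_mul, Complex.exp_ofReal_mul_I_im]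
    exact mul_pos (norm_pos_iff.2 hc) hsin

/-- The rational function `D / p` maps the open upper half plane to the closed lower one and vice
versa. Multiplying by `|p|²` makes the condition meaningful, and continuous, at the poles. -/
def Dissipative (D p : ℂ[X]) : Prop :=
  ∀ y : ℂ, y.im * (D.eval y * conj (p.eval y)).im ≤ 0

theorem Dissipative.im_mul_im_div_nonpos (h : Dissipative D p) (y : ℂ) :
    y.im * (D.eval y / p.eval y).im ≤ 0 := by
  have hdiv : D.eval y / p.eval y =
      ((Complex.normSq (p.eval y))⁻¹ : ℝ) * (D.eval y * conj (p.eval y)) := by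
    rw [div_eq_mul_inv, Complex.inv_def]
    ring
  rw [hdiv, Complex.im_ofReal_mul, mul_left_comm]
  exact mul_nonpos_of_nonneg_of_nonpos (inv_nonneg.2 (Complex.normSq_nonneg _)) (h y)

theorem Dissipative.ray (h : Dissipative D ((X - C ρ) ^ m * g)) (u : ℂ) {t : ℝ} (ht : 0 < t) :
    (ρ.im + t * u.im) *
      (D.eval (ρ + t * u) * conj (g.eval (ρ + t * u)) * conj (u ^ m)).im ≤ 0 := by
  have hray := h (ρ + t * u)
  have hfactor : D.eval (ρ + t * u) * conj (((X - C ρ) ^ m * g).eval (ρ + t * u)) =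
      ((t ^ m : ℝ) : ℂ) * (D.eval (ρ + t * u) * conj (g.eval (ρ + t * u)) * conj (u ^ m)) := by
    simp only [eval_mul, eval_pow, eval_sub, eval_X, eval_C, add_sub_cancel_left, map_mul, map_pow,
      mul_pow, Complex.conj_ofReal, Complex.ofReal_pow]
    ring
  rw [hfactor, Complex.im_ofReal_mul, mul_left_comm] at hray
  simpa using nonpos_of_mul_nonpos_right hray (pow_pos ht m)

theorem Dissipative.im_mul_im_conj_pow_nonpos (h : Dissipative D ((X - C ρ) ^ m * g)) (u : ℂ) :
    ρ.im * (D.eval ρ * conj (g.eval ρ) * conj (u ^ m)).im ≤ 0 := by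
  simpa using le_of_continuous_of_forall_gt (a := 0)
    (f := fun t ↦ (ρ.im + t * u.im) *
      (D.eval (ρ + t * u) * conj (g.eval (ρ + t * u)) * conj (u ^ m)).im)
    (by fun_prop) continuous_const fun t ht ↦ h.ray u ht

theorem Dissipative.im_mul_im_conj_pow_nonpos_of_im_eq_zero
    (h : Dissipative D ((X - C ρ) ^ m * g)) (hρ : ρ.im = 0) (u : ℂ) :
    u.im * (D.eval ρ * conj (g.eval ρ) * conj (u ^ m)).im ≤ 0 := by
  have hpos : ∀ t : ℝ, 0 < t →
      u.im * (D.eval (ρ + t * u) * conj (g.eval (ρ + t * u)) * conj (u ^ m)).im ≤ 0 := by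
    intro t ht
    have hray := h.ray u ht
    rw [hρ, zero_add, mul_assoc] at hray
    exact nonpos_of_mul_nonpos_right hray ht
  simpa using le_of_continuous_of_forall_gt (by fun_prop) continuous_const hpos

theorem Dissipative.im_eq_zero (h : Dissipative D ((X - C ρ) ^ m * g)) (hm : m ≠ 0)
    (hD : D.eval ρ ≠ 0) (hg : g.eval ρ ≠ 0) : ρ.im = 0 := by
  by_contra hρ
  set e := D.eval ρ * conj (g.eval ρ)
  have he : e ≠ 0 := mul_ne_zero hD ((_root_.map_ne_zero _).2 hg)
  obtain ⟨u, hu⟩ := IsAlgClosed.exists_pow_nat_eq (-Complex.I * (ρ.im * e)) (Nat.pos_of_ne_zero hm)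
  have hnonpos := h.im_mul_im_conj_pow_nonpos u
  have hrot : e * conj (-Complex.I * (ρ.im * e)) = (ρ.im * Complex.normSq e : ℝ) * Complex.I := by
    simp only [map_mul, map_neg, Complex.conj_I, Complex.conj_ofReal, Complex.ofReal_mul,
      Complex.normSq_eq_conj_mul_self]
    ring
  rw [hu, hrot, Complex.im_ofReal_mul, Complex.I_im, mul_one, ← mul_assoc] at hnonpos
  exact hnonpos.not_gt (mul_pos (mul_self_pos.2 hρ) (Complex.normSq_pos.2 he))

theorem Dissipative.order_le_one (h : Dissipative D ((X - C ρ) ^ m * g)) (hD : D.eval ρ ≠ 0)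
    (hg : g.eval ρ ≠ 0) (hρ : ρ.im = 0) : m ≤ 1 := by
  by_contra! hm
  set e := D.eval ρ * conj (g.eval ρ)
  have he : -conj e ≠ 0 :=
    neg_ne_zero.2 ((_root_.map_ne_zero _).2 (mul_ne_zero hD ((_root_.map_ne_zero _).2 hg)))
  obtain ⟨u, hu, hu'⟩ := exists_im_pos_and_im_mul_pow_pos he hm
  have hconj : (e * conj (u ^ m)).im = (-conj e * u ^ m).im := by
    rw [neg_mul, Complex.neg_im, ← Complex.conj_im, map_mul, Complex.conj_conj]
  have hnonpos := h.im_mul_im_conj_pow_nonpos_of_im_eq_zero hρ u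
  rw [hconj] at hnonpos
  exact hnonpos.not_gt (mul_pos hu hu')

theorem Dissipative.exists_eval_div_eval_eq (h : Dissipative D ((X - C ρ) * g))
    (hg : g.eval ρ ≠ 0) (hρ : ρ.im = 0) :
    ∃ c : ℝ, 0 ≤ c ∧ D.eval ρ / g.eval ρ = c := by
  rw [← pow_one (X - C ρ)] at h
  set e := D.eval ρ * conj (g.eval ρ) with he
  have hline (x : ℝ) : x * e.im ≤ e.re := by
    simpa [← he, mul_comm] using h.im_mul_im_conj_pow_nonpos_of_im_eq_zero hρ (x + Complex.I)
  have him : e.im = 0 := by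
    by_contra h0
    have := hline ((e.re + 1) / e.im)
    rw [div_mul_cancel₀ _ h0] at this
    linarith
  have hre : (e.re : ℂ) = e := Complex.conj_eq_iff_re.1 (Complex.conj_eq_iff_im.2 him)
  refine ⟨e.re / Complex.normSq (g.eval ρ),
    div_nonneg (by simpa using hline 0) (Complex.normSq_nonneg _), ?_⟩
  rw [Complex.ofReal_div, hre, he, Complex.normSq_eq_conj_mul_self, mul_comm (conj _),
    mul_div_mul_right _ _ ((_root_.map_ne_zero _).2 hg)]

theorem Dissipative.im_eq_zero_and_rootMultiplicity_eq_one (h : Dissipative D p) (hp : p ≠ 0)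
    (hρ : p.IsRoot ρ) (hD : D.eval ρ ≠ 0) : ρ.im = 0 ∧ p.rootMultiplicity ρ = 1 := by
  obtain ⟨g, hpg, hdvd⟩ := exists_eq_pow_rootMultiplicity_mul_and_not_dvd p hp ρ
  have hg : g.eval ρ ≠ 0 := fun h0 ↦ hdvd (dvd_iff_isRoot.2 h0)
  have hm : 0 < p.rootMultiplicity ρ := (rootMultiplicity_pos hp).2 hρ
  rw [hpg] at h
  have him := h.im_eq_zero hm.ne' hD hg
  exact ⟨him, (h.order_le_one hD hg him).antisymm hm⟩

theorem Dissipative.exists_residue (h : Dissipative D p) (hp : p ≠ 0) (hρ : p.IsRoot ρ)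
    (hD : D.eval ρ ≠ 0) : ∃ c : ℝ, 0 ≤ c ∧ D.eval ρ / p.derivative.eval ρ = c := by
  obtain ⟨him, hm⟩ := h.im_eq_zero_and_rootMultiplicity_eq_one hp hρ hD
  obtain ⟨g, hpg, hdvd⟩ := exists_eq_pow_rootMultiplicity_mul_and_not_dvd p hp ρ
  rw [hm, pow_one] at hpg
  subst hpg
  obtain ⟨c, hc, hDg⟩ := h.exists_eval_div_eval_eq (fun h0 ↦ hdvd (dvd_iff_isRoot.2 h0)) him
  exact ⟨c, hc, by simpa [derivative_mul] using hDg⟩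

theorem im_leadingCoeff_mul_pow_nonpos {K : ℝ} (h : ∀ y : ℂ, y.im * (Q.eval y).im ≤ K) {u : ℂ}
    (hu : 0 < u.im) : (Q.leadingCoeff * u ^ Q.natDegree).im ≤ 0 := by
  have hu0 : u ≠ 0 := by
    rintro rfl
    simp at hu
  have hpos : ∀ s : ℝ, 0 < s →
      u.im * (Q.reverse.eval (s * u⁻¹) * u ^ Q.natDegree).im ≤ K * s ^ (Q.natDegree + 1) := by
    intro s hs
    have hus : u / s ≠ 0 := div_ne_zero hu0 (mod_cast hs.ne')
    let _ := invertibleOfNonzero hus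
    have hrev : Q.reverse.eval (s * u⁻¹) * (u ^ Q.natDegree / s ^ Q.natDegree) =
        Q.eval (u / s) := by
      simpa [eval₂_id, div_eq_mul_inv, div_pow, mul_pow] using
        eval₂_reverse_mul_pow (RingHom.id ℂ) (u / s) Q
    have hbound := h (u / s)
    rwa [← hrev, Complex.div_ofReal_im, ← mul_div_assoc, ← Complex.ofReal_pow,
      Complex.div_ofReal_im, div_mul_div_comm, ← pow_succ', div_le_iff₀ (by positivity)] at hbound
  have hlim := le_of_continuous_of_forall_gt (by fun_prop) (by fun_prop) hpos
  rw [Complex.ofReal_zero, zero_mul, ← coeff_zero_eq_eval_zero, coeff_zero_reverse,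
    zero_pow (Nat.succ_ne_zero _), mul_zero] at hlim
  exact nonpos_of_mul_nonpos_right hlim hu

theorem natDegree_le_one_of_im_mul_im_eval_le {K : ℝ} (h : ∀ y : ℂ, y.im * (Q.eval y).im ≤ K) :
    Q.natDegree ≤ 1 := by
  by_contra! hd
  have hlead : Q.leadingCoeff ≠ 0 := leadingCoeff_ne_zero.2 (ne_zero_of_natDegree_gt hd)
  obtain ⟨u, hu, hu'⟩ := exists_im_pos_and_im_mul_pow_pos hlead hd
  exact (im_leadingCoeff_mul_pow_nonpos h hu).not_gt hu'

theorem exists_re_eval_eq_of_im_mul_im_eval_le {K : ℝ} (h : ∀ y : ℂ, y.im * (Q.eval y).im ≤ K) :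
    ∃ a b : ℝ, a ≤ 0 ∧ ∀ t : ℝ, (Q.eval (t : ℂ)).re = a * t + b := by
  have hdeg := natDegree_le_one_of_im_mul_im_eval_le h
  refine ⟨(Q.coeff 1).re, (Q.coeff 0).re, ?_, fun t ↦ ?_⟩
  · rcases hdeg.lt_or_eq with hlt | heq
    · simp [coeff_eq_zero_of_natDegree_lt hlt]
    · simpa [leadingCoeff, heq] using im_leadingCoeff_mul_pow_nonpos h (u := Complex.I) (by simp)
  · rw [eq_X_add_C_of_natDegree_le_one hdeg]
    simp

theorem exists_eval_div_eval_eq_add_sum {K : Type*} [Field K] [DecidableEq K] (D : K[X]) {p : K[X]}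
    (hp : p.Splits) (hnodup : p.roots.Nodup) :
    ∃ Q : K[X], ∀ y, p.eval y ≠ 0 → D.eval y / p.eval y =
      Q.eval y + ∑ ρ ∈ p.roots.toFinset, D.eval ρ / p.derivative.eval ρ / (y - ρ) := by
  set s := p.roots.toFinset
  set N := Lagrange.nodal s id with hN
  have hpN : p = C p.leadingCoeff * N := by
    have hval : s.val = p.roots := by rw [Multiset.toFinset_val, hnodup.dedup]
    conv_lhs => rw [hp.eq_prod_roots, ← hval]
    rfl
  have hmonic : N.Monic := Lagrange.nodal_monic
  have hinterp : D %ₘ N = Lagrange.interpolate s id fun ρ ↦ D.eval ρ := by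
    refine Lagrange.eq_interpolate_of_eval_eq _ Function.injective_id.injOn ?_ fun ρ hρ ↦ ?_
    · exact (degree_modByMonic_lt D hmonic).trans_eq Lagrange.degree_nodal
    · have hNρ : N.eval ρ = 0 := Lagrange.eval_nodal_at_node (v := id) hρ
      nth_rw 2 [← modByMonic_add_div D N]
      simp [hNρ]
  refine ⟨C p.leadingCoeff⁻¹ * (D /ₘ N), fun y hy ↦ ?_⟩
  have hlead : p.leadingCoeff ≠ 0 := leadingCoeff_ne_zero.2 fun h0 ↦ hy (by rw [h0, eval_zero])
  have hNy : N.eval y ≠ 0 := fun h0 ↦ hy (by rw [hpN, eval_mul, h0, mul_zero])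
  have hnode : ∀ ρ ∈ s, y ≠ id ρ := by
    rintro ρ hρ rfl
    exact hNy (Lagrange.eval_nodal_at_node (v := id) hρ)
  have hweight : ∀ ρ ∈ s, D.eval ρ / p.derivative.eval ρ / (y - ρ) =
      p.leadingCoeff⁻¹ * (Lagrange.nodalWeight s id ρ * (y - id ρ)⁻¹ * D.eval ρ) := by
    intro ρ hρ
    rw [Lagrange.nodalWeight_eq_eval_derivative_nodal hρ, ← hN]
    conv_lhs => rw [hpN, derivative_C_mul, eval_C_mul]
    simp only [id, div_eq_mul_inv, mul_inv]
    ring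
  rw [Finset.sum_congr rfl hweight, ← Finset.mul_sum, eval_C_mul, ← mul_add]
  conv_lhs => rw [hpN, eval_C_mul, ← modByMonic_add_div D N, eval_add, hinterp,
    Lagrange.eval_interpolate_not_at_node _ hnode, eval_mul, ← hN]
  field_simp
  ring

/-- The partial fraction expansion on the real line of a Nevanlinna-type rational function `D / p`:
the poles `ρ` are real, the residues `c ρ` nonnegative and the polynomial part is affine and
decreasing. -/
def HasNevanlinnaExpansion (D p : ℂ[X]) : Prop :=
  ∃ (s : Finset ℝ) (c : ℝ → ℝ) (a b : ℝ), a ≤ 0 ∧ (∀ ρ ∈ s, 0 ≤ c ρ ∧ p.eval (ρ : ℂ) = 0) ∧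
    ∀ t : ℝ, p.eval (t : ℂ) ≠ 0 →
      (D.eval (t : ℂ) / p.eval (t : ℂ)).re = a * t + b + ∑ ρ ∈ s, c ρ / (t - ρ)

theorem neg_le_im_mul_im_div_sub {c : ℝ} (hc : 0 ≤ c) (hρ : ρ.im = 0) (y : ℂ) :
    -c ≤ y.im * (c / (y - ρ)).im := by
  have him : y.im * (c / (y - ρ)).im = -(c * (y.im ^ 2 / Complex.normSq (y - ρ))) := by
    rw [div_eq_mul_inv, Complex.im_ofReal_mul, Complex.inv_im, Complex.sub_im, hρ]
    ring
  have hle : y.im ^ 2 ≤ Complex.normSq (y - ρ) := by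
    simpa [hρ, sq] using Complex.im_sq_le_normSq (y - ρ)
  rw [him, neg_le_neg_iff]
  exact mul_le_of_le_one_right hc (div_le_one_of_le₀ hle (Complex.normSq_nonneg _))

theorem Dissipative.im_mul_im_eval_le_sum (h : Dissipative D p) {s : Finset ℂ} {c : ℂ → ℝ}
    (hp : ∀ ρ, p.IsRoot ρ → ρ.im = 0) (hs : ∀ ρ ∈ s, ρ.im = 0 ∧ 0 ≤ c ρ)
    (hQ : ∀ y, p.eval y ≠ 0 → D.eval y / p.eval y = Q.eval y + ∑ ρ ∈ s, c ρ / (y - ρ)) (y : ℂ) :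
    y.im * (Q.eval y).im ≤ ∑ ρ ∈ s, c ρ := by
  rcases eq_or_ne y.im 0 with hy | hy
  · simpa [hy] using Finset.sum_nonneg fun ρ hρ ↦ (hs ρ hρ).2
  have hdiv := h.im_mul_im_div_nonpos y
  have hpoles := Finset.sum_le_sum fun ρ hρ ↦ neg_le_im_mul_im_div_sub (hs ρ hρ).2 (hs ρ hρ).1 y
  rw [hQ y fun hpy ↦ hy (hp y hpy), Complex.add_im, Complex.im_sum, mul_add, Finset.mul_sum] at hdiv
  rw [Finset.sum_neg_distrib] at hpoles
  linarith

theorem Dissipative.hasNevanlinnaExpansion_of_no_common_root (h : Dissipative D p) (hp : p ≠ 0)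
    (hD : ∀ ρ, p.IsRoot ρ → D.eval ρ ≠ 0) : HasNevanlinnaExpansion D p := by
  have hroot (ρ : ℂ) (hρ : p.IsRoot ρ) := h.im_eq_zero_and_rootMultiplicity_eq_one hp hρ (hD ρ hρ)
  have hnodup : p.roots.Nodup := Multiset.nodup_iff_count_le_one.2 fun ρ ↦ by
    rw [count_roots]
    by_cases hρ : p.IsRoot ρ
    · exact (hroot ρ hρ).2.le
    · simp [rootMultiplicity_eq_zero hρ]
  choose! c hc0 hc using fun ρ (hρ : p.IsRoot ρ) ↦ h.exists_residue hp hρ (hD ρ hρ)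
  obtain ⟨Q, hQ⟩ := exists_eval_div_eval_eq_add_sum D (IsAlgClosed.splits p) hnodup
  set s := p.roots.toFinset
  have hmem : ∀ ρ ∈ s, p.IsRoot ρ := fun ρ hρ ↦ isRoot_of_mem_roots (Multiset.mem_toFinset.1 hρ)
  have hexp (y : ℂ) (hy : p.eval y ≠ 0) :
      D.eval y / p.eval y = Q.eval y + ∑ ρ ∈ s, c ρ / (y - ρ) := by
    rw [hQ y hy]
    exact congrArg _ (Finset.sum_congr rfl fun ρ hρ ↦ by rw [hc ρ (hmem ρ hρ)])
  have hQbound := h.im_mul_im_eval_le_sum (fun ρ hρ ↦ (hroot ρ hρ).1)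
    (fun ρ hρ ↦ ⟨(hroot ρ (hmem ρ hρ)).1, hc0 ρ (hmem ρ hρ)⟩) hexp
  obtain ⟨a, b, ha, hab⟩ := exists_re_eval_eq_of_im_mul_im_eval_le hQbound
  have hreal : ∀ ρ ∈ s, (ρ.re : ℂ) = ρ := fun ρ hρ ↦
    Complex.conj_eq_iff_re.1 (Complex.conj_eq_iff_im.2 (hroot ρ (hmem ρ hρ)).1)
  refine ⟨s.image Complex.re, fun x ↦ c x, a, b, ha, ?_, fun t ht ↦ ?_⟩
  · simp only [Finset.forall_mem_image]
    intro ρ hρ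
    rw [hreal ρ hρ]
    exact ⟨hc0 ρ (hmem ρ hρ), hmem ρ hρ⟩
  · rw [hexp t ht, Complex.add_re, hab, Complex.re_sum, Finset.sum_image]
    · refine congrArg _ (Finset.sum_congr rfl fun ρ hρ ↦ ?_)
      simp only [hreal ρ hρ]
      rw [← Complex.ofReal_re (c ρ / (t - ρ.re)), Complex.ofReal_div, Complex.ofReal_sub,
        hreal ρ hρ]
    · exact fun ρ hρ σ hσ heq ↦ by rw [← hreal ρ hρ, ← hreal σ hσ, heq]

theorem Dissipative.of_mul_X_sub_C (h : Dissipative ((X - C ρ) * D) ((X - C ρ) * p)) :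
    Dissipative D p := by
  have hne : ∀ y ≠ ρ, y.im * (D.eval y * conj (p.eval y)).im ≤ 0 := by
    intro y hy
    have hfactor : ((X - C ρ) * D).eval y * conj (((X - C ρ) * p).eval y) =
        (Complex.normSq (y - ρ) : ℝ) * (D.eval y * conj (p.eval y)) := by
      simp only [eval_mul, eval_sub, eval_X, eval_C, map_mul, Complex.normSq_eq_conj_mul_self]
      ring
    have hy' := h y
    rw [hfactor, Complex.im_ofReal_mul, mul_left_comm] at hy'
    exact nonpos_of_mul_nonpos_right hy' (Complex.normSq_pos.2 (sub_ne_zero.2 hy))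
  intro y
  rcases eq_or_ne y ρ with rfl | hy
  · have hlim := le_of_continuous_of_forall_gt (a := 0)
      (f := fun t : ℝ ↦ (y + t * Complex.I).im *
        (D.eval (y + t * Complex.I) * conj (p.eval (y + t * Complex.I))).im)
      (by fun_prop) continuous_const fun t ht ↦ hne _ (by simpa using ht.ne')
    simpa using hlim
  · exact hne y hy

theorem Dissipative.hasNevanlinnaExpansion (h : Dissipative D p) (hp : p ≠ 0) :
    HasNevanlinnaExpansion D p := by
  induction hd : p.natDegree using Nat.strong_induction_on generalizing D p with
  | _ d ih =>
  by_cases hD : ∀ ρ, p.IsRoot ρ → D.eval ρ ≠ 0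
  · exact h.hasNevanlinnaExpansion_of_no_common_root hp hD
  push Not at hD
  obtain ⟨ρ, hpρ, hDρ⟩ := hD
  obtain ⟨p, rfl⟩ := dvd_iff_isRoot.2 hpρ
  obtain ⟨D, rfl⟩ := dvd_iff_isRoot.2 hDρ
  have hp' : p ≠ 0 := right_ne_zero_of_mul hp
  rw [natDegree_mul (X_sub_C_ne_zero ρ) hp', natDegree_X_sub_C] at hd
  obtain ⟨s, c, a, b, ha, hs, hf⟩ := ih _ (by lia) h.of_mul_X_sub_C hp' rfl
  refine ⟨s, c, a, b, ha, fun σ hσ ↦ ⟨(hs σ hσ).1, ?_⟩, fun t ht ↦ ?_⟩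
  · rw [eval_mul, (hs σ hσ).2, mul_zero]
  · rw [eval_mul] at ht
    rw [eval_mul, eval_mul, mul_div_mul_left _ _ (left_ne_zero_of_mul ht),
      hf t (right_ne_zero_of_mul ht)]

theorem HasNevanlinnaExpansion.antitoneOn {x : ℝ} (h : HasNevanlinnaExpansion D p)
    (hp : ∀ t : ℝ, x ≤ t → p.eval (t : ℂ) ≠ 0) :
    AntitoneOn (fun t : ℝ ↦ (D.eval (t : ℂ) / p.eval (t : ℂ)).re) (Set.Ici x) := by
  obtain ⟨s, c, a, b, ha, hs, hf⟩ := h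
  intro t₁ ht₁ t₂ ht₂ hle
  simp only [hf _ (hp _ ht₁), hf _ (hp _ ht₂)]
  refine add_le_add (by nlinarith) (Finset.sum_le_sum fun ρ hρ ↦ ?_)
  have hlt : ρ < x := lt_of_not_ge fun hge ↦ hp ρ hge (hs ρ hρ).2
  have : x ≤ t₁ := ht₁
  exact div_le_div_of_nonneg_left (hs ρ hρ).1 (by linarith) (by linarith)

theorem HasNevanlinnaExpansion.convexOn {x : ℝ} (h : HasNevanlinnaExpansion D p)
    (hp : ∀ t : ℝ, x ≤ t → p.eval (t : ℂ) ≠ 0) :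
    ConvexOn ℝ (Set.Ici x) (fun t : ℝ ↦ (D.eval (t : ℂ) / p.eval (t : ℂ)).re) := by
  obtain ⟨s, c, a, b, -, hs, hf⟩ := h
  refine ConvexOn.congr (f := fun t ↦ a * t + b + ∑ ρ ∈ s, c ρ / (t - ρ)) ?_
    fun t ht ↦ (hf t (hp t ht)).symm
  have hpole : ∀ ρ ∈ s, ConvexOn ℝ (Set.Ici x) fun t ↦ c ρ / (t - ρ) := by
    intro ρ hρ
    have hlt : ρ < x := lt_of_not_ge fun hge ↦ hp ρ hge (hs ρ hρ).2
    have hinv := ((convexOn_zpow (𝕜 := ℝ) (-1)).translate_left (-ρ)).smul (hs ρ hρ).1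
    have hsub : Set.Ici x ⊆ (fun t ↦ -ρ + t) ⁻¹' Set.Ioi 0 := fun t (ht : x ≤ t) ↦ by
      simp only [Set.mem_preimage, Set.mem_Ioi]
      linarith
    simpa [div_eq_mul_inv, sub_eq_add_neg, Function.comp_def] using hinv.subset hsub (convex_Ici x)
  have hsum := Finset.sum_induction (fun ρ t ↦ c ρ / (t - ρ)) (ConvexOn ℝ (Set.Ici x))
    (fun _ _ ↦ ConvexOn.add) (convexOn_const 0 (convex_Ici x)) hpole
  have haffine : ConvexOn ℝ (Set.Ici x) fun t ↦ a * t + b :=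
    ((LinearMap.mulLeft ℝ a).convexOn (convex_Ici x)).add_const b
  rw [Finset.sum_fn] at hsum
  exact haffine.add hsum

end Dissipative

section RealStable

open MvPolynomial

variable {σ : Type*} {P : MvPolynomial σ ℂ} {u w : σ → ℝ}

/-- The derivative in the direction of a real vector. -/
noncomputable def dirDeriv (w : σ → ℝ) :
    Derivation ℂ (MvPolynomial σ ℂ) (MvPolynomial σ ℂ) :=
  mkDerivation ℂ fun i ↦ C (w i : ℂ)

theorem dirDeriv_X (w : σ → ℝ) (i : σ) : dirDeriv w (X i) = C (w i : ℂ) :=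
  mkDerivation_X _ _ _

theorem dirDeriv_comm (w u : σ → ℝ) (P : MvPolynomial σ ℂ) :
    dirDeriv w (dirDeriv u P) = dirDeriv u (dirDeriv w P) := by
  have hcomm : ⁅dirDeriv w, dirDeriv u⁆ = (0 : Derivation ℂ _ (MvPolynomial σ ℂ)) :=
    derivation_ext fun i ↦ by simp [Derivation.commutator_apply, dirDeriv_X]
  simpa [Derivation.commutator_apply, sub_eq_zero] using DFunLike.congr_fun hcomm P

theorem map_conj_dirDeriv (w : σ → ℝ) (P : MvPolynomial σ ℂ) :
    map conj (dirDeriv w P) = dirDeriv w (map conj P) := by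
  induction P using MvPolynomial.induction_on with
  | C a => simp
  | add p q hp hq => simp [hp, hq]
  | mul_X p i hp => simp [Derivation.leibniz, hp, dirDeriv_X]

theorem dirDeriv_sum_smul {ι : Type*} (s : Finset ι) (c : ι → ℝ) (w : ι → σ → ℝ)
    (P : MvPolynomial σ ℂ) :
    dirDeriv (∑ i ∈ s, c i • w i) P = ∑ i ∈ s, (c i : ℂ) • dirDeriv (w i) P := by
  induction P using MvPolynomial.induction_on with
  | C a => simp
  | add p q hp hq => simp only [map_add, hp, hq, smul_add, Finset.sum_add_distrib]
  | mul_X p j hp =>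
    simp only [Derivation.leibniz, hp, dirDeriv_X, Finset.sum_apply, Pi.smul_apply, smul_eq_mul,
      smul_add, Finset.sum_add_distrib, Finset.mul_sum, Complex.ofReal_sum, Complex.ofReal_mul,
      map_sum, map_mul, MvPolynomial.smul_eq_C_mul]
    congr 1 <;> exact Finset.sum_congr rfl fun i _ ↦ by ring

/-- The restriction of a polynomial to the line `t ↦ z + t w`. -/
noncomputable def lineRestrict (z : σ → ℂ) (w : σ → ℝ) : MvPolynomial σ ℂ →ₐ[ℂ] Polynomial ℂ :=
  aeval fun i ↦ Polynomial.C (z i) + Polynomial.C (w i : ℂ) * Polynomial.X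

theorem eval_lineRestrict (z : σ → ℂ) (w : σ → ℝ) (P : MvPolynomial σ ℂ) (t : ℂ) :
    (lineRestrict z w P).eval t = eval (fun i ↦ z i + t * w i) P := by
  have hcomp : (Polynomial.aeval t).comp (lineRestrict z w) = aeval fun i ↦ z i + t * w i :=
    algHom_ext fun i ↦ by
      simp [lineRestrict, mul_comm t]
  simpa [Polynomial.coe_aeval_eq_eval, coe_aeval_eq_eval] using DFunLike.congr_fun hcomp P

theorem derivative_lineRestrict (z : σ → ℂ) (w : σ → ℝ) (P : MvPolynomial σ ℂ) :
    (lineRestrict z w P).derivative = lineRestrict z w (dirDeriv w P) := by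
  induction P using MvPolynomial.induction_on with
  | C a => simp [lineRestrict]
  | add p q hp hq => simp [hp, hq]
  | mul_X p i hp =>
    rw [map_mul, Polynomial.derivative_mul, hp, Derivation.leibniz, dirDeriv_X]
    simp only [lineRestrict, smul_eq_mul, map_add, map_mul, aeval_X, aeval_C,
      Polynomial.derivative_mul, Polynomial.derivative_C, Polynomial.derivative_X,
      Polynomial.algebraMap_eq]
    ring

/-- Real stable polynomials: those with real coefficients and no zero with all coordinates in the
open upper half plane. Realness is encoded as invariance under conjugation of the coefficients. -/
structure RealStable (P : MvPolynomial σ ℂ) : Prop where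
  eval_ne_zero : ∀ z : σ → ℂ, (∀ i, 0 < (z i).im) → eval z P ≠ 0
  map_conj : map conj P = P

theorem eval_conj_of_map_conj_eq (h : map conj P = P) (z : σ → ℂ) :
    eval (fun i ↦ conj (z i)) P = conj (eval z P) := by
  nth_rw 1 [← h]
  exact (map_eval conj z P).symm

theorem eval_derivative_div_eval_eq_zero_or_im_neg {q : Polynomial ℂ} {y : ℂ} (hy : q.eval y ≠ 0)
    (hq : ∀ ρ ∈ q.roots, ρ.im < y.im) :
    q.derivative.eval y / q.eval y = 0 ∨ (q.derivative.eval y / q.eval y).im < 0 := by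
  have hterm : ∀ ρ ∈ q.roots, (1 / (y - ρ)).im < 0 := by
    intro ρ hρ
    have him : 0 < (y - ρ).im := by simpa using hq ρ hρ
    rw [one_div, Complex.inv_im]
    exact div_neg_of_neg_of_pos (neg_neg_of_pos him)
      (Complex.normSq_pos.2 fun h0 ↦ by simp [h0] at him)
  rw [(IsAlgClosed.splits q).eval_derivative_div_eval_of_ne_zero hy]
  generalize q.roots = R at hterm
  induction R using Multiset.induction with
  | empty => simp
  | cons ρ R ih =>
    rw [Multiset.forall_mem_cons] at hterm
    right
    rw [Multiset.map_cons, Multiset.sum_cons, Complex.add_im]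
    rcases ih hterm.2 with h | h
    · rw [h]
      simpa using hterm.1
    · exact add_neg hterm.1 h

theorem RealStable.eval_dirDeriv_div_eval_eq_zero_or_im_neg (h : RealStable P) (hw : 0 ≤ w)
    {z : σ → ℂ} (hz : ∀ i, 0 < (z i).im) :
    eval z (dirDeriv w P) / eval z P = 0 ∨ (eval z (dirDeriv w P) / eval z P).im < 0 := by
  have heval (Q : MvPolynomial σ ℂ) : (lineRestrict z w Q).eval 0 = eval z Q := by
    simp [eval_lineRestrict]
  rw [← heval, ← heval, ← derivative_lineRestrict]
  refine eval_derivative_div_eval_eq_zero_or_im_neg ?_ fun ρ hρ ↦ ?_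
  · rw [heval]
    exact h.eval_ne_zero z hz
  · by_contra! hρ0
    refine h.eval_ne_zero (fun i ↦ z i + ρ * w i) (fun i ↦ ?_) ?_
    · simpa using add_pos_of_pos_of_nonneg (hz i) (mul_nonneg hρ0 (hw i))
    · rw [← eval_lineRestrict]
      exact Polynomial.isRoot_of_mem_roots hρ

/-- The operator `1 - ∂_w`. -/
noncomputable def shiftOp (w : σ → ℝ) (P : MvPolynomial σ ℂ) : MvPolynomial σ ℂ :=
  P - dirDeriv w P

theorem dirDeriv_shiftOp (u w : σ → ℝ) (P : MvPolynomial σ ℂ) :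
    dirDeriv u (shiftOp w P) = shiftOp w (dirDeriv u P) := by
  rw [shiftOp, shiftOp, map_sub, dirDeriv_comm]

theorem shiftOp_comm (u w : σ → ℝ) (P : MvPolynomial σ ℂ) :
    shiftOp u (shiftOp w P) = shiftOp w (shiftOp u P) := by
  rw [shiftOp, dirDeriv_shiftOp]
  simp only [shiftOp, map_sub]
  ring

protected theorem RealStable.shiftOp (h : RealStable P) (hw : 0 ≤ w) :
    RealStable (shiftOp w P) where
  eval_ne_zero z hz h0 := by
    rw [shiftOp, map_sub, sub_eq_zero] at h0
    have hratio := h.eval_dirDeriv_div_eval_eq_zero_or_im_neg hw hz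
    rw [← h0, div_self (h.eval_ne_zero z hz)] at hratio
    simp at hratio
  map_conj := by
    rw [shiftOp, map_sub, map_conj_dirDeriv, h.map_conj]

theorem RealStable.im_eval_dirDeriv_mul_conj_nonpos (h : RealStable P) (hu : 0 ≤ u) {z : σ → ℂ}
    (hz : ∀ i, 0 ≤ (z i).im) : (eval z (dirDeriv u P) * conj (eval z P)).im ≤ 0 := by
  have hpos : ∀ t : ℝ, 0 < t → (eval (fun i ↦ z i + t * Complex.I) (dirDeriv u P) *
      conj (eval (fun i ↦ z i + t * Complex.I) P)).im ≤ 0 := by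
    intro t ht
    have hzt (i : σ) : 0 < (z i + t * Complex.I).im := by
      simpa using add_pos_of_nonneg_of_pos (hz i) ht
    have hne := h.eval_ne_zero _ hzt
    have hmul : eval (fun i ↦ z i + t * Complex.I) (dirDeriv u P) *
        conj (eval (fun i ↦ z i + t * Complex.I) P) =
        (Complex.normSq (eval (fun i ↦ z i + t * Complex.I) P) : ℝ) *
        (eval (fun i ↦ z i + t * Complex.I) (dirDeriv u P) /
          eval (fun i ↦ z i + t * Complex.I) P) := by
      rw [Complex.normSq_eq_conj_mul_self]
      field_simp
    rw [hmul, Complex.im_ofReal_mul]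
    refine mul_nonpos_of_nonneg_of_nonpos (Complex.normSq_nonneg _) ?_
    rcases h.eval_dirDeriv_div_eval_eq_zero_or_im_neg hu hzt with h0 | hneg
    · simp [h0]
    · exact hneg.le
  have hcont (Q : MvPolynomial σ ℂ) :
      Continuous fun t : ℝ ↦ eval (fun i ↦ z i + t * Complex.I) Q :=
    (continuous_eval Q).comp (by fun_prop)
  have hcont_im := Complex.continuous_im.comp <|
    (hcont (dirDeriv u P)).mul <| Complex.continuous_conj.comp (hcont P)
  simpa using le_of_continuous_of_forall_gt hcont_im continuous_const hpos

theorem RealStable.dissipative_lineRestrict (h : RealStable P) (hu : 0 ≤ u) (hw : 0 ≤ w)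
    (z : σ → ℝ) :
    Dissipative (lineRestrict (fun i ↦ z i) w (dirDeriv u P)) (lineRestrict (fun i ↦ z i) w P) := by
  have hupper (y : ℂ) (hy : 0 ≤ y.im) :
      (eval (fun i ↦ (z i : ℂ) + y * w i) (dirDeriv u P) *
        conj (eval (fun i ↦ (z i : ℂ) + y * w i) P)).im ≤ 0 :=
    h.im_eval_dirDeriv_mul_conj_nonpos hu fun i ↦ by simpa using mul_nonneg hy (hw i)
  intro y
  rw [eval_lineRestrict, eval_lineRestrict]
  rcases le_total 0 y.im with hy | hy
  · exact mul_nonpos_of_nonneg_of_nonpos hy (hupper y hy)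
  · have hlower := hupper (conj y) (by simpa using hy)
    have hconj : (fun i ↦ (z i : ℂ) + conj y * w i) = fun i ↦ conj ((z i : ℂ) + y * w i) := by
      ext i
      simp
    have hreal : map conj (dirDeriv u P) = dirDeriv u P := by rw [map_conj_dirDeriv, h.map_conj]
    rw [hconj, eval_conj_of_map_conj_eq hreal, eval_conj_of_map_conj_eq h.map_conj, ← map_mul,
      Complex.conj_im, neg_nonpos] at hlower
    exact mul_nonpos_of_nonpos_of_nonneg hy hlower

end RealStable

section Barrier

variable {σ : Type*} {P : MvPolynomial σ ℂ} {u w z : σ → ℝ}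

/-- The real part of the value of a polynomial at a real point; for a polynomial with real
coefficients this is its value. -/
noncomputable def realEval (z : σ → ℝ) (P : MvPolynomial σ ℂ) : ℝ :=
  (MvPolynomial.eval (fun i ↦ (z i : ℂ)) P).re

theorem realEval_shiftOp (z w : σ → ℝ) (P : MvPolynomial σ ℂ) :
    realEval z (shiftOp w P) = realEval z P - realEval z (dirDeriv w P) := by
  simp [realEval, shiftOp]

theorem realEval_dirDeriv_sum_smul {ι : Type*} (z : σ → ℝ) (s : Finset ι) (c : ι → ℝ)
    (w : ι → σ → ℝ) (P : MvPolynomial σ ℂ) :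
    realEval z (dirDeriv (∑ i ∈ s, c i • w i) P) =
      ∑ i ∈ s, c i * realEval z (dirDeriv (w i) P) := by
  simp only [realEval, dirDeriv_sum_smul, map_sum, MvPolynomial.smul_eval, Complex.re_sum,
    Complex.re_ofReal_mul]

theorem ofReal_realEval (h : MvPolynomial.map conj P = P) (z : σ → ℝ) :
    (realEval z P : ℂ) = MvPolynomial.eval (fun i ↦ (z i : ℂ)) P := by
  have hconj := eval_conj_of_map_conj_eq h fun i ↦ (z i : ℂ)
  simp only [Complex.conj_ofReal] at hconj
  exact Complex.conj_eq_iff_re.1 hconj.symm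

theorem eval_lineRestrict_ofReal (h : MvPolynomial.map conj P = P) (z w : σ → ℝ) (t : ℝ) :
    (lineRestrict (fun i ↦ z i) w P).eval (t : ℂ) = (realEval (z + t • w) P : ℂ) := by
  rw [eval_lineRestrict, ofReal_realEval h]
  simp

theorem hasDerivAt_realEval_line (h : MvPolynomial.map conj P = P) (z w : σ → ℝ) (t : ℝ) :
    HasDerivAt (fun t : ℝ ↦ realEval (z + t • w) P) (realEval (z + t • w) (dirDeriv w P)) t := by
  have hderiv := ((lineRestrict (fun i ↦ z i) w P).hasDerivAt (t : ℂ)).real_of_complex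
  rw [derivative_lineRestrict,
    eval_lineRestrict_ofReal (by rw [map_conj_dirDeriv, h]), Complex.ofReal_re] at hderiv
  simpa only [eval_lineRestrict_ofReal h, Complex.ofReal_re] using hderiv

theorem continuous_realEval_smul (P : MvPolynomial σ ℂ) (e : σ → ℝ) :
    Continuous fun t : ℝ ↦ realEval (t • e) P :=
  Complex.continuous_re.comp ((MvPolynomial.continuous_eval P).comp (by fun_prop))

/-- The barrier function of Marcus, Spielman and Srivastava: the logarithmic derivative of `P` in
the direction `u` at the real point `z`. -/
noncomputable def barrier (u : σ → ℝ) (P : MvPolynomial σ ℂ) (z : σ → ℝ) : ℝ :=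
  realEval z (dirDeriv u P) / realEval z P

theorem RealStable.re_lineRestrict_div_eq_barrier (h : RealStable P) (u w z : σ → ℝ) (t : ℝ) :
    ((lineRestrict (fun i ↦ z i) w (dirDeriv u P)).eval (t : ℂ) /
      (lineRestrict (fun i ↦ z i) w P).eval (t : ℂ)).re = barrier u P (z + t • w) := by
  rw [eval_lineRestrict_ofReal h.map_conj,
    eval_lineRestrict_ofReal (by rw [map_conj_dirDeriv, h.map_conj]), ← Complex.ofReal_div,
    Complex.ofReal_re, barrier]

theorem RealStable.hasNevanlinnaExpansion_lineRestrict (h : RealStable P) (hu : 0 ≤ u)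
    (hw : 0 ≤ w) {x : ℝ} (hx : realEval (z + x • w) P ≠ 0) :
    HasNevanlinnaExpansion (lineRestrict (fun i ↦ z i) w (dirDeriv u P))
      (lineRestrict (fun i ↦ z i) w P) :=
  (h.dissipative_lineRestrict hu hw z).hasNevanlinnaExpansion fun h0 ↦ hx <| by
    simpa [h0] using (eval_lineRestrict_ofReal h.map_conj z w x).symm

theorem RealStable.barrier_antitoneOn (h : RealStable P) (hu : 0 ≤ u) (hw : 0 ≤ w) {x : ℝ}
    (hP : ∀ t, x ≤ t → realEval (z + t • w) P ≠ 0) :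
    AntitoneOn (fun t : ℝ ↦ barrier u P (z + t • w)) (Set.Ici x) := by
  simpa only [h.re_lineRestrict_div_eq_barrier] using
    (h.hasNevanlinnaExpansion_lineRestrict hu hw (hP x le_rfl)).antitoneOn fun t ht ↦ by
      rw [eval_lineRestrict_ofReal h.map_conj]
      exact_mod_cast hP t ht

theorem RealStable.barrier_convexOn (h : RealStable P) (hu : 0 ≤ u) (hw : 0 ≤ w) {x : ℝ}
    (hP : ∀ t, x ≤ t → realEval (z + t • w) P ≠ 0) :
    ConvexOn ℝ (Set.Ici x) fun t : ℝ ↦ barrier u P (z + t • w) := by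
  simpa only [h.re_lineRestrict_div_eq_barrier] using
    (h.hasNevanlinnaExpansion_lineRestrict hu hw (hP x le_rfl)).convexOn fun t ht ↦ by
      rw [eval_lineRestrict_ofReal h.map_conj]
      exact_mod_cast hP t ht

theorem RealStable.hasDerivAt_barrier_line (h : RealStable P) (u w z : σ → ℝ) {t : ℝ}
    (ht : realEval (z + t • w) P ≠ 0) :
    HasDerivAt (fun t : ℝ ↦ barrier u P (z + t • w))
      ((realEval (z + t • w) (dirDeriv w (dirDeriv u P)) * realEval (z + t • w) P -
        realEval (z + t • w) (dirDeriv u P) * realEval (z + t • w) (dirDeriv w P)) /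
        realEval (z + t • w) P ^ 2) t :=
  (hasDerivAt_realEval_line (by rw [map_conj_dirDeriv, h.map_conj]) z w t).div
    (hasDerivAt_realEval_line h.map_conj z w t) ht

/-- `P` is positive on the orthant with apex `z`, so that `z` lies above the real zeros of `P`. -/
def IsAbove (z : σ → ℝ) (P : MvPolynomial σ ℂ) : Prop :=
  ∀ y : σ → ℝ, 0 ≤ y → 0 < realEval (z + y) P

theorem IsAbove.pos (h : IsAbove z P) : 0 < realEval z P := by
  simpa using h 0 le_rfl

theorem IsAbove.mono (h : IsAbove z P) {y : σ → ℝ} (hy : 0 ≤ y) : IsAbove (z + y) P :=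
  fun x hx ↦ by
    rw [add_assoc]
    exact h _ (add_nonneg hy hx)

theorem IsAbove.realEval_line_ne_zero (h : IsAbove z P) (hw : 0 ≤ w) {t : ℝ} (ht : 0 ≤ t) :
    realEval (z + t • w) P ≠ 0 :=
  (h _ (smul_nonneg ht hw)).ne'

theorem RealStable.barrier_add_le (h : RealStable P) (hz : IsAbove z P) (hu : 0 ≤ u) {y : σ → ℝ}
    (hy : 0 ≤ y) : barrier u P (z + y) ≤ barrier u P z := by
  simpa using h.barrier_antitoneOn hu hy (fun t ↦ hz.realEval_line_ne_zero hy)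
    Set.self_mem_Ici (Set.mem_Ici.2 zero_le_one) zero_le_one

theorem RealStable.realEval_div_le_realEval_shiftOp (h : RealStable P) (hz : IsAbove z P)
    (hw : 0 ≤ w) {d : ℝ} (hb : barrier w P z ≤ 1 - 1 / d) {y : σ → ℝ} (hy : 0 ≤ y) :
    realEval (z + y) P / d ≤ realEval (z + y) (shiftOp w P) := by
  have hle := (h.barrier_add_le hz hw hy).trans hb
  rw [barrier, div_le_iff₀ (hz y hy)] at hle
  rw [realEval_shiftOp, div_eq_mul_one_div]
  linarith

theorem RealStable.isAbove_shiftOp (h : RealStable P) (hz : IsAbove z P) (hw : 0 ≤ w) {d : ℝ}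
    (hd : 0 < d) (hb : barrier w P z ≤ 1 - 1 / d) : IsAbove z (shiftOp w P) :=
  fun y hy ↦ (div_pos (hz y hy) hd).trans_le (h.realEval_div_le_realEval_shiftOp hz hw hb hy)

/-- Writing `f t` for the barrier of `P` along the line, the barrier of `(1 - ∂_w) P` at `t = d` is
`f d - θ f' d` with `θ ≤ d`, and convexity gives `f d - d f' d ≤ f 0`. -/
theorem RealStable.barrier_shiftOp_le (h : RealStable P) (hz : IsAbove z P) (hu : 0 ≤ u)
    (hw : 0 ≤ w) {d : ℝ} (hd : 0 < d) (hb : barrier w P z ≤ 1 - 1 / d) :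
    barrier u (shiftOp w P) (z + d • w) ≤ barrier u P z := by
  have hne (t : ℝ) (ht : 0 ≤ t) := hz.realEval_line_ne_zero hw ht
  have hderiv := h.hasDerivAt_barrier_line u w z (hne d hd.le)
  have hpos := hz _ (smul_nonneg hd.le hw)
  have hge := h.realEval_div_le_realEval_shiftOp hz hw hb (smul_nonneg hd.le hw)
  have hshift_pos := (div_pos hpos hd).trans_le hge
  have hbarrier : barrier u (shiftOp w P) (z + d • w) = barrier u P (z + d • w) -
      realEval (z + d • w) P / realEval (z + d • w) (shiftOp w P) *
        deriv (fun t : ℝ ↦ barrier u P (z + t • w)) d := by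
    rw [hderiv.deriv, barrier, barrier, dirDeriv_shiftOp]
    rw [realEval_shiftOp] at hshift_pos
    rw [realEval_shiftOp, realEval_shiftOp]
    field_simp
    ring
  have hderiv_nonpos : deriv (fun t : ℝ ↦ barrier u P (z + t • w)) d ≤ 0 := by
    have hinterior := (h.barrier_antitoneOn hu hw hne).derivWithin_nonpos (x := d)
    rwa [derivWithin_of_mem_nhds (Ici_mem_nhds hd)] at hinterior
  have hconvex : deriv (fun t : ℝ ↦ barrier u P (z + t • w)) d * d ≥
      barrier u P (z + d • w) - barrier u P z := by
    have hslope := (h.barrier_convexOn hu hw hne).slope_le_of_hasDerivAt Set.self_mem_Ici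
      (Set.mem_Ici.2 hd.le) hd hderiv.differentiableAt.hasDerivAt
    rw [slope_def_field, sub_zero, div_le_iff₀ hd] at hslope
    simpa using hslope
  have hfactor : realEval (z + d • w) P / realEval (z + d • w) (shiftOp w P) ≤ d := by
    rwa [div_le_iff₀ hshift_pos, mul_comm, ← div_le_iff₀ hd]
  rw [hbarrier]
  linarith [mul_le_mul_of_nonpos_right hfactor hderiv_nonpos]

/-- The composition of the operators `1 - ∂_w` over a list of directions `w`. -/
noncomputable def shiftList (l : List (σ → ℝ)) (P : MvPolynomial σ ℂ) : MvPolynomial σ ℂ :=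
  l.foldr shiftOp P

theorem shiftList_cons (w : σ → ℝ) (l : List (σ → ℝ)) (P : MvPolynomial σ ℂ) :
    shiftList (w :: l) P = shiftOp w (shiftList l P) := rfl

theorem shiftList_shiftOp (w : σ → ℝ) (l : List (σ → ℝ)) (P : MvPolynomial σ ℂ) :
    shiftList l (shiftOp w P) = shiftOp w (shiftList l P) := by
  induction l with
  | nil => rfl
  | cons u l ih => rw [shiftList_cons, shiftList_cons, ih, shiftOp_comm]

protected theorem RealStable.shiftList (h : RealStable P) {l : List (σ → ℝ)}
    (hl : ∀ w ∈ l, 0 ≤ w) : RealStable (shiftList l P) := by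
  induction l with
  | nil => exact h
  | cons u l ih =>
    rw [List.forall_mem_cons] at hl
    exact (ih hl.2).shiftOp hl.1

theorem RealStable.isAbove_shiftList (h : RealStable P) (hz : IsAbove z P) {l : List (σ → ℝ)}
    (hl : ∀ w ∈ l, 0 ≤ w) {d : ℝ} (hd : 0 < d) (hb : ∀ w ∈ l, barrier w P z ≤ 1 - 1 / d) :
    IsAbove (z + d • l.sum) (shiftList l P) := by
  induction l generalizing P z with
  | nil => simpa [shiftList] using hz
  | cons w l ih =>
    rw [List.forall_mem_cons] at hl hb
    have hw := (h.isAbove_shiftOp hz hl.1 hd hb.1).mono (smul_nonneg hd.le hl.1)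
    have hrest := ih (h.shiftOp hl.1) hw hl.2 fun u hu ↦
      (h.barrier_shiftOp_le hz (hl.2 u hu) hl.1 hd hb.1).trans (hb.2 u hu)
    rwa [shiftList_shiftOp, add_assoc, ← smul_add, ← List.sum_cons] at hrest

end Barrier

section Choice

open Topology

variable {σ : Type*} {P : MvPolynomial σ ℂ} {e : σ → ℝ}

theorem exists_last_zero_of_nonpos {g : ℝ → ℝ} (hg : Continuous g) {x₀ x : ℝ}
    (hpos : ∀ y, x₀ < y → 0 < g y) (hx : g x ≤ 0) :
    ∃ x₁, x ≤ x₁ ∧ g x₁ = 0 ∧ ∀ y, x₁ < y → 0 < g y := by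
  have hle_of_nonpos {y : ℝ} (hy : g y ≤ 0) : y ≤ x₀ := not_lt.1 fun h ↦ (hpos y h).not_ge hy
  have hcompact : IsCompact (Set.Icc x x₀ ∩ g ⁻¹' Set.Iic 0) :=
    isCompact_Icc.inter_right (isClosed_Iic.preimage hg)
  obtain ⟨x₁, ⟨⟨hxx₁, -⟩, hx₁⟩, hmax⟩ :=
    hcompact.exists_isGreatest ⟨x, ⟨le_rfl, hle_of_nonpos hx⟩, hx⟩
  have hafter : ∀ y, x₁ < y → 0 < g y := by
    intro y hy
    by_contra! hneg
    exact (hmax ⟨⟨hxx₁.trans hy.le, hle_of_nonpos hneg⟩, hneg⟩).not_gt hy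
  exact ⟨x₁, hxx₁, le_antisymm hx₁
    (le_of_continuous_of_forall_gt continuous_const hg fun y hy ↦ (hafter y hy).le), hafter⟩

theorem RealStable.barrier_antitoneOn_ray (h : RealStable P) {u : σ → ℝ} (hu : 0 ≤ u) (he : 0 ≤ e)
    {x : ℝ} (hP : ∀ t, x ≤ t → 0 < realEval (t • e) P) :
    AntitoneOn (fun t : ℝ ↦ barrier u P (t • e)) (Set.Ici x) := by
  simpa using h.barrier_antitoneOn hu he (z := 0) fun t ht ↦ by simpa using (hP t ht).ne'

theorem RealStable.pos_of_shiftOp_pos (h : RealStable P) {w : σ → ℝ} (hw : 0 ≤ w) (he : 0 ≤ e)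
    {x₀ b : ℝ} (hlarge : ∀ x, x₀ < x → 0 < realEval (x • e) P)
    (hshift : ∀ x : ℝ, b < x → 0 < realEval (x • e) (shiftOp w P)) {x : ℝ} (hx : b < x) :
    0 < realEval (x • e) P := by
  by_contra! hneg
  obtain ⟨x₁, hxx₁, hzero, hpos⟩ :=
    exists_last_zero_of_nonpos (continuous_realEval_smul P e) hlarge hneg
  have hderiv_neg : realEval (x₁ • e) (dirDeriv w P) < 0 := by
    have hx₁ := hshift x₁ (hx.trans_le hxx₁)
    rw [realEval_shiftOp, hzero] at hx₁
    linarith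
  -- The barrier is antitone, hence bounded below to the right of the zero `x₁`.
  have hlower : ∀ᶠ t in 𝓝[>] x₁, barrier w P ((x₁ + 1) • e) * realEval (t • e) P ≤
      realEval (t • e) (dirDeriv w P) := by
    filter_upwards [Ioo_mem_nhdsGT (lt_add_one x₁)] with t ht
    rw [← le_div_iff₀ (hpos t ht.1)]
    exact h.barrier_antitoneOn_ray hw he (fun s hs ↦ hpos s (ht.1.trans_le hs)) Set.self_mem_Ici
      ht.2.le ht.2.le
  have hle := le_of_tendsto_of_tendsto
    ((continuous_const.mul (continuous_realEval_smul P e)).continuousWithinAt)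
    (continuous_realEval_smul (dirDeriv w P) e).continuousWithinAt hlower
  simp only [Pi.mul_apply, hzero, mul_zero] at hle
  exact hle.not_gt hderiv_neg

/-- If `P - ∂_{u k} P` had a zero beyond `b` for every `k`, then at the smallest of these zeros
every `∂_{u k} P` would be at least `P`, and so would their average. -/
theorem RealStable.exists_shiftOp_pos {K : Type*} [Fintype K] [Nonempty K] (h : RealStable P)
    {p : K → ℝ} (hp : 0 ≤ p) (hp1 : ∑ k, p k = 1) {u : K → σ → ℝ} (hu : 0 ≤ u) (he : 0 ≤ e)
    {x₀ b : ℝ} (hlarge : ∀ x, x₀ < x → 0 < realEval (x • e) P)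
    (hmean : ∀ x : ℝ, b < x → 0 < realEval (x • e) (shiftOp (∑ k, p k • u k) P)) :
    ∃ k, ∀ x, b < x → 0 < realEval (x • e) (shiftOp (u k) P) := by
  have hpos : ∀ x, b < x → 0 < realEval (x • e) P := fun x hx ↦
    h.pos_of_shiftOp_pos (Finset.sum_nonneg fun k _ ↦ smul_nonneg (hp k) (hu k)) he hlarge hmean hx
  by_contra! hcon
  choose x hx hxle using hcon
  obtain ⟨m, hm⟩ := Finite.exists_min x
  have hge (k : K) : realEval (x m • e) P ≤ realEval (x m • e) (dirDeriv (u k) P) := by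
    have hbarrier : barrier (u k) P (x k • e) ≤ barrier (u k) P (x m • e) :=
      h.barrier_antitoneOn_ray (hu k) he (fun t ht ↦ hpos t ((hx m).trans_le ht))
        Set.self_mem_Ici (hm k) (hm k)
    have hone := hxle k
    rw [realEval_shiftOp, sub_nonpos, ← one_le_div (hpos _ (hx k))] at hone
    exact (one_le_div (hpos _ (hx m))).1 (hone.trans hbarrier)
  have hsum : ∑ k, p k * realEval (x m • e) P ≤
      ∑ k, p k * realEval (x m • e) (dirDeriv (u k) P) :=
    Finset.sum_le_sum fun k _ ↦ mul_le_mul_of_nonneg_left (hge k) (hp k)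
  have hlt := hmean _ (hx m)
  rw [← Finset.sum_mul, hp1, one_mul] at hsum
  rw [realEval_shiftOp, realEval_dirDeriv_sum_smul] at hlt
  linarith

theorem RealStable.exists_choice {J K : Type*} [Fintype K] [Nonempty K] (h : RealStable P)
    {p : J → K → ℝ} (hp : 0 ≤ p) (hp1 : ∀ j, ∑ k, p j k = 1) {u : J → K → σ → ℝ} (hu : 0 ≤ u)
    (he : 0 ≤ e)
    (hlarge : ∀ l : List (σ → ℝ), (∀ w ∈ l, 0 ≤ w) →
      ∃ x₀ : ℝ, ∀ x : ℝ, x₀ < x → 0 < realEval (x • e) (shiftList l P))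
    {b : ℝ} {js : List J} (hjs : js.Nodup)
    (hmean : ∀ x : ℝ, b < x →
      0 < realEval (x • e) (shiftList (js.map fun j ↦ ∑ k, p j k • u j k) P)) :
    ∃ f : J → K, ∀ x : ℝ, b < x →
      0 < realEval (x • e) (shiftList (js.map fun j ↦ u j (f j)) P) := by
  classical
  induction js generalizing P with
  | nil => exact ⟨fun _ ↦ Classical.arbitrary K, hmean⟩
  | cons j js ih =>
    rw [List.nodup_cons] at hjs
    have hw : ∀ w ∈ js.map fun j ↦ ∑ k, p j k • u j k, 0 ≤ w := by
      rw [List.forall_mem_map]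
      exact fun i _ ↦ Finset.sum_nonneg fun k _ ↦ smul_nonneg (hp i k) (hu i k)
    obtain ⟨x₀, hx₀⟩ := hlarge _ hw
    obtain ⟨k, hk⟩ := (h.shiftList hw).exists_shiftOp_pos (hp j) (hp1 j) (hu j) he hx₀ hmean
    obtain ⟨f, hf⟩ := ih (h.shiftOp (hu j k)) (fun l hl ↦ by
      rw [shiftList_shiftOp]
      exact hlarge (u j k :: l) (List.forall_mem_cons.2 ⟨hu j k, hl⟩)) hjs.2 (by
      rwa [shiftList_shiftOp])
    have htail : (js.map fun i ↦ u i (Function.update f j k i)) = js.map fun i ↦ u i (f i) :=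
      List.map_congr_left fun i hi ↦ by
        rw [Function.update_of_ne (ne_of_mem_of_not_mem hi hjs.1)]
    refine ⟨Function.update f j k, fun x hx ↦ ?_⟩
    rw [List.map_cons, Function.update_self, htail, shiftList_cons, ← shiftList_shiftOp]
    exact hf x hx

end Choice

section MixedDet

open Matrix

theorem exists_det_add_smul_vecMulVec {n R : Type*} [Fintype n] [DecidableEq n] [CommRing R]
    (A : Matrix n n R) (u v : n → R) :
    ∃ a b : R, ∀ t, (A + t • vecMulVec u v).det = a * t + b := by
  -- By the Schur complement, the determinant is that of the block matrix `[A, u; -t v, 1]`, which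
  -- is affine in its last row.
  set N := fromBlocks A (replicateCol Unit u) 0 (1 : Matrix Unit Unit R)
  refine ⟨(N.updateRow (Sum.inr ()) (Sum.elim (-v) 0)).det,
    (N.updateRow (Sum.inr ()) (Sum.elim (0 : n → R) (1 : Unit → R))).det, fun t ↦ ?_⟩
  have hschur : A + t • vecMulVec u v = A - replicateCol Unit u * (-t • replicateRow Unit v) := by
    rw [vecMulVec_eq Unit, Matrix.mul_smul, neg_smul, sub_neg_eq_add]
  have hrow : fromBlocks A (replicateCol Unit u) (-t • replicateRow Unit v) 1 =
      N.updateRow (Sum.inr ()) (t • Sum.elim (-v) 0 + Sum.elim (0 : n → R) (1 : Unit → R)) := by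
    ext (i | i) (j | j) <;> simp [N, updateRow_apply, one_apply]
  rw [hschur, ← det_fromBlocks_one₂₂, hrow, det_updateRow_add, det_updateRow_smul, mul_comm]

theorem det_add_vecMulVec {n R : Type*} [Fintype n] [DecidableEq n] [CommRing R]
    {A : Matrix n n R} (hA : IsUnit A.det) (u v : n → R) :
    (A + vecMulVec u v).det = A.det * (1 + v ⬝ᵥ (A⁻¹ *ᵥ u)) := by
  rw [vecMulVec_eq Unit, det_add_replicateCol_mul_replicateRow hA, det_unique (n := Unit),
    Matrix.mul_assoc, ← replicateCol_mulVec]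
  simp [mul_apply, dotProduct]

variable {n Ω : Type*} [Fintype n]

/-- The squared Euclidean norm. -/
noncomputable def sqNorm (u : n → ℂ) : ℝ := ∑ i, Complex.normSq (u i)

theorem sqNorm_nonneg (u : n → ℂ) : 0 ≤ sqNorm u :=
  Finset.sum_nonneg fun _ _ ↦ Complex.normSq_nonneg _

theorem sqNorm_pos {u : n → ℂ} (hu : u ≠ 0) : 0 < sqNorm u := by
  obtain ⟨i, hi⟩ := Function.ne_iff.1 hu
  exact Finset.sum_pos' (fun _ _ ↦ Complex.normSq_nonneg _)
    ⟨i, Finset.mem_univ i, Complex.normSq_pos.2 hi⟩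

theorem sqNorm_star (u : n → ℂ) : sqNorm (star u) = sqNorm u := by
  simp [sqNorm]

theorem star_dotProduct_self (u : n → ℂ) : star u ⬝ᵥ u = sqNorm u := by
  simp [sqNorm, dotProduct, Complex.normSq_eq_conj_mul_self]

theorem normSq_dotProduct_le (u v : n → ℂ) :
    Complex.normSq (u ⬝ᵥ v) ≤ sqNorm u * sqNorm v := by
  have htriangle : ‖u ⬝ᵥ v‖ ≤ ∑ i, ‖u i‖ * ‖v i‖ :=
    (norm_sum_le _ _).trans_eq (Finset.sum_congr rfl fun i _ ↦ norm_mul _ _)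
  simp only [sqNorm, Complex.normSq_eq_norm_sq]
  exact (pow_le_pow_left₀ (norm_nonneg _) htriangle 2).trans
    (Finset.sum_mul_sq_le_sq_mul_sq _ _ _)

/-- The squared absolute values of the coefficients of `u` along the vectors `v a`. -/
noncomputable def coeffSq (v : Ω → n → ℂ) (u : n → ℂ) (a : Ω) : ℝ :=
  Complex.normSq (star (v a) ⬝ᵥ u)

theorem coeffSq_nonneg (v : Ω → n → ℂ) (u : n → ℂ) : 0 ≤ coeffSq v u :=
  fun _ ↦ Complex.normSq_nonneg _

theorem coeffSq_le (v : Ω → n → ℂ) (u : n → ℂ) (a : Ω) :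
    coeffSq v u a ≤ sqNorm (v a) * sqNorm u := by
  simpa [coeffSq, sqNorm_star] using normSq_dotProduct_le (star (v a)) u

variable [Fintype Ω]

/-- The sum of the rank one matrices `v a * (v a)ᴴ` with complex weights `z a`. -/
noncomputable def rankOneSum (v : Ω → n → ℂ) : (Ω → ℂ) →ₗ[ℂ] Matrix n n ℂ :=
  Fintype.linearCombination ℂ fun a ↦ vecMulVec (v a) (star (v a))

theorem star_dotProduct_rankOneSum (v : Ω → n → ℂ) (z : Ω → ℂ) (u : n → ℂ) :
    star u ⬝ᵥ (rankOneSum v z *ᵥ u) = ∑ a, z a * coeffSq v u a := by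
  rw [rankOneSum, Fintype.linearCombination_apply, sum_mulVec, dotProduct_sum]
  refine Finset.sum_congr rfl fun a _ ↦ ?_
  rw [smul_mulVec, vecMulVec_mulVec, dotProduct_smul, dotProduct_smul, smul_eq_mul,
    MulOpposite.smul_eq_mul_unop, MulOpposite.unop_op, coeffSq, Complex.normSq_eq_conj_mul_self,
    ← Complex.star_def, star_dotProduct]

theorem star_dotProduct_rankOneSum_ofReal (v : Ω → n → ℂ) (z : Ω → ℝ) (u : n → ℂ) :
    star u ⬝ᵥ (rankOneSum v (fun a ↦ z a) *ᵥ u) = (z ⬝ᵥ coeffSq v u : ℝ) := by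
  rw [star_dotProduct_rankOneSum]
  simp [dotProduct]

omit [Fintype n] in
theorem isHermitian_rankOneSum (v : Ω → n → ℂ) (z : Ω → ℝ) :
    (rankOneSum v fun a ↦ z a).IsHermitian := by
  ext i j
  simp [rankOneSum, Fintype.linearCombination_apply, Matrix.sum_apply, vecMulVec_apply, mul_comm]

variable [DecidableEq n] {v : Ω → n → ℂ}

/-- The determinant of a weighted sum of rank one matrices, as a polynomial in the weights. -/
noncomputable def mixedDet (v : Ω → n → ℂ) : MvPolynomial Ω ℂ :=
  (∑ a, (MvPolynomial.X a : MvPolynomial Ω ℂ) •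
    (vecMulVec (v a) (star (v a))).map MvPolynomial.C).det

theorem eval_mixedDet (v : Ω → n → ℂ) (z : Ω → ℂ) :
    MvPolynomial.eval z (mixedDet v) = (rankOneSum v z).det := by
  rw [mixedDet, RingHom.map_det]
  congr 1
  ext i j
  simp [rankOneSum, Fintype.linearCombination_apply, Matrix.sum_apply]

theorem map_conj_mixedDet (v : Ω → n → ℂ) : MvPolynomial.map conj (mixedDet v) = mixedDet v := by
  rw [mixedDet, RingHom.map_det, ← det_transpose]
  congr 1
  ext1 i j
  simp [Matrix.sum_apply, vecMulVec_apply, mul_comm]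

theorem ofReal_realEval_mixedDet (v : Ω → n → ℂ) (z : Ω → ℝ) :
    (realEval z (mixedDet v) : ℂ) = (rankOneSum v fun a ↦ z a).det := by
  rw [ofReal_realEval (map_conj_mixedDet v), eval_mixedDet]

theorem realStable_mixedDet (hv : ∀ u, (∀ a, star (v a) ⬝ᵥ u = 0) → u = 0) :
    RealStable (mixedDet v) where
  eval_ne_zero z hz h0 := by
    rw [eval_mixedDet] at h0
    obtain ⟨u, hu, hker⟩ := exists_mulVec_eq_zero_iff.2 h0
    have hform := star_dotProduct_rankOneSum v z u
    rw [hker, dotProduct_zero] at hform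
    have him : ∑ a, (z a).im * coeffSq v u a = 0 := by
      simpa [Complex.im_mul_ofReal] using (congrArg Complex.im hform).symm
    refine hu (hv u fun a ↦ Complex.normSq_eq_zero.1 ?_)
    have hterm := (Finset.sum_eq_zero_iff_of_nonneg fun a _ ↦
      mul_nonneg (hz a).le (coeffSq_nonneg v u a)).1 him a (Finset.mem_univ a)
    exact (mul_eq_zero.1 hterm).resolve_left (hz a).ne'
  map_conj := map_conj_mixedDet v

section SecondDerivative

variable [DecidableEq Ω]

theorem eval_lineRestrict_single_mixedDet (v : Ω → n → ℂ) (z : Ω → ℂ) (a : Ω) (t : ℂ) :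
    (lineRestrict z (Pi.single a 1) (mixedDet v)).eval t =
      (rankOneSum v z + t • vecMulVec (v a) (star (v a))).det := by
  have hline : (fun i ↦ z i + t * ((Pi.single a 1 : Ω → ℝ) i : ℂ)) = z + Pi.single a t := by
    ext i
    by_cases h : i = a <;> simp [h]
  rw [eval_lineRestrict, eval_mixedDet, hline, map_add, rankOneSum,
    Fintype.linearCombination_apply_single]

theorem exists_lineRestrict_single_mixedDet_eq (v : Ω → n → ℂ) (z : Ω → ℂ) (a : Ω) :
    ∃ α β : ℂ, lineRestrict z (Pi.single a 1) (mixedDet v) =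
      Polynomial.C α * Polynomial.X + Polynomial.C β := by
  obtain ⟨α, β, h⟩ := exists_det_add_smul_vecMulVec (rankOneSum v z) (v a) (star (v a))
  exact ⟨α, β, Polynomial.funext fun t ↦ by simp [eval_lineRestrict_single_mixedDet, h]⟩

theorem dirDeriv_single_dirDeriv_single_mixedDet (v : Ω → n → ℂ) (a : Ω) :
    dirDeriv (Pi.single a 1) (dirDeriv (Pi.single a 1) (mixedDet v)) = 0 := by
  refine MvPolynomial.funext fun z ↦ ?_
  obtain ⟨α, β, h⟩ := exists_lineRestrict_single_mixedDet_eq v z a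
  have hderiv := congrArg (fun f ↦ f.derivative.derivative.eval 0) h
  simp only [derivative_lineRestrict, eval_lineRestrict] at hderiv
  simpa using hderiv

theorem eval_dirDeriv_single_mixedDet (v : Ω → n → ℂ) (z : Ω → ℂ) (a : Ω) :
    MvPolynomial.eval z (dirDeriv (Pi.single a 1) (mixedDet v)) =
      (rankOneSum v z + vecMulVec (v a) (star (v a))).det - (rankOneSum v z).det := by
  obtain ⟨α, β, h⟩ := exists_lineRestrict_single_mixedDet_eq v z a
  have hderiv := congrArg (fun f ↦ f.derivative.eval 0) h
  have hzero := eval_lineRestrict_single_mixedDet v z a 0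
  have hone := eval_lineRestrict_single_mixedDet v z a 1
  simp only [derivative_lineRestrict, eval_lineRestrict] at hderiv
  rw [h] at hzero hone
  simp only [zero_smul, one_smul, add_zero] at hzero hone
  rw [← hzero, ← hone]
  simpa using hderiv

end SecondDerivative

end MixedDet

section Gap

open Matrix

variable {n Ω : Type*} [Fintype n] [Fintype Ω] {v : Ω → n → ℂ} {z : Ω → ℝ} {c : ℝ}

/-- The Hermitian matrix `rankOneSum v z` is at least `c` in the Loewner order. -/
def HasGap (v : Ω → n → ℂ) (z : Ω → ℝ) (c : ℝ) : Prop :=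
  ∀ u, c * sqNorm u ≤ z ⬝ᵥ coeffSq v u

theorem HasGap.add (h : HasGap v z c) {y : Ω → ℝ} (hy : 0 ≤ y) : HasGap v (z + y) c :=
  fun u ↦ (h u).trans <| by
    rw [add_dotProduct]
    exact le_add_of_nonneg_right (dotProduct_nonneg_of_nonneg hy (coeffSq_nonneg v u))

theorem HasGap.posDef (h : HasGap v z c) (hc : 0 < c) : (rankOneSum v fun a ↦ z a).PosDef := by
  refine .of_dotProduct_mulVec_pos (isHermitian_rankOneSum v z) fun u hu ↦ ?_
  rw [star_dotProduct_rankOneSum_ofReal]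
  exact_mod_cast (mul_pos hc (sqNorm_pos hu)).trans_le (h u)

theorem re_star_dotProduct_inv_mulVec_le [DecidableEq n] {M : Matrix n n ℂ} (hdet : IsUnit M.det)
    (hc : 0 < c) (hM : ∀ u, c * sqNorm u ≤ (star u ⬝ᵥ (M *ᵥ u)).re) (x : n → ℂ) :
    (star x ⬝ᵥ (M⁻¹ *ᵥ x)).re ≤ sqNorm x / c := by
  set y := M⁻¹ *ᵥ x
  have hy : c * sqNorm y ≤ (star x ⬝ᵥ y).re := by
    have hMy : M *ᵥ y = x := by rw [mulVec_mulVec, mul_nonsing_inv _ hdet, one_mulVec]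
    have hle := hM y
    rwa [hMy, star_dotProduct, Complex.star_def, Complex.conj_re] at hle
  have hcauchy : (star x ⬝ᵥ y).re ^ 2 ≤ sqNorm x * sqNorm y := by
    rw [← sqNorm_star x, sq]
    exact (Complex.re_sq_le_normSq _).trans (normSq_dotProduct_le (star x) y)
  rw [le_div_iff₀ hc]
  by_contra! hlt
  have hre := pos_of_mul_pos_left ((sqNorm_nonneg x).trans_lt hlt) hc.le
  nlinarith [mul_le_mul_of_nonneg_left hy (sqNorm_nonneg x), mul_pos hre (sub_pos.2 hlt)]

variable [DecidableEq n]

theorem HasGap.isAbove (h : HasGap v z c) (hc : 0 < c) : IsAbove z (mixedDet v) := by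
  intro y hy
  rw [realEval, eval_mixedDet]
  exact (Complex.pos_iff.1 ((h.add hy).posDef hc).det_pos).1

theorem HasGap.realEval_dirDeriv_single_le [DecidableEq Ω] (h : HasGap v z c) (hc : 0 < c) (a : Ω) :
    realEval z (dirDeriv (Pi.single a 1) (mixedDet v)) ≤
      sqNorm (v a) / c * realEval z (mixedDet v) := by
  have hdet : IsUnit (rankOneSum v fun a ↦ z a).det :=
    isUnit_iff_ne_zero.2 (h.posDef hc).det_pos.ne'
  rw [realEval, eval_dirDeriv_single_mixedDet, det_add_vecMulVec hdet, mul_one_add,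
    add_sub_cancel_left, ← ofReal_realEval_mixedDet, Complex.re_ofReal_mul, mul_comm]
  refine mul_le_mul_of_nonneg_right ?_ (h.isAbove hc).pos.le
  refine re_star_dotProduct_inv_mulVec_le hdet hc (fun u ↦ ?_) _
  rw [star_dotProduct_rankOneSum_ofReal, Complex.ofReal_re]
  exact h u

theorem HasGap.barrier_le (h : HasGap v z c) (hc : 0 < c) {w : Ω → ℝ} (hw : 0 ≤ w) :
    barrier w (mixedDet v) z ≤ (w ⬝ᵥ fun a ↦ sqNorm (v a)) / c := by
  classical
  rw [barrier, div_le_iff₀ (h.isAbove hc).pos, pi_eq_sum_univ' w, realEval_dirDeriv_sum_smul,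
    ← pi_eq_sum_univ' w, dotProduct, Finset.sum_div, Finset.sum_mul]
  refine Finset.sum_le_sum fun a _ ↦ ?_
  rw [mul_div_assoc, mul_assoc]
  exact mul_le_mul_of_nonneg_left (h.realEval_dirDeriv_single_le hc a) (hw a)

end Gap

section Affine

variable {σ : Type*}

theorem eval_sub_eval_derivative_of_derivative_derivative_eq_zero {f : Polynomial ℂ}
    (hf : f.derivative.derivative = 0) : f.eval 0 - f.derivative.eval 0 = f.eval (-1) := by
  have hderiv : f.derivative = Polynomial.C (f.derivative.coeff 0) :=
    Polynomial.eq_C_of_derivative_eq_zero hf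
  set c := f.derivative.coeff 0
  obtain ⟨b, hb⟩ : ∃ b, f - Polynomial.C c * Polynomial.X = Polynomial.C b :=
    ⟨_, Polynomial.eq_C_of_derivative_eq_zero <| by simp [hderiv]⟩
  rw [sub_eq_iff_eq_add] at hb
  rw [hderiv, hb]
  simp [sub_eq_add_neg]

theorem realEval_shiftOp_of_dirDeriv_dirDeriv_eq_zero {w : σ → ℝ} {P : MvPolynomial σ ℂ}
    (h : dirDeriv w (dirDeriv w P) = 0) (z : σ → ℝ) :
    realEval z (shiftOp w P) = realEval (z - w) P := by
  have hline := eval_sub_eval_derivative_of_derivative_derivative_eq_zero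
    (f := lineRestrict (fun i ↦ z i) w P) <| by
      rw [derivative_lineRestrict, derivative_lineRestrict, h, map_zero]
  simp only [derivative_lineRestrict, eval_lineRestrict] at hline
  simpa [realEval, shiftOp, ← sub_eq_add_neg] using congrArg Complex.re hline

theorem dirDeriv_shiftList (u : σ → ℝ) (l : List (σ → ℝ)) (P : MvPolynomial σ ℂ) :
    dirDeriv u (shiftList l P) = shiftList l (dirDeriv u P) := by
  induction l with
  | nil => rfl
  | cons w l ih => rw [shiftList_cons, shiftList_cons, dirDeriv_shiftOp, ih]

theorem shiftList_zero (l : List (σ → ℝ)) : shiftList l (0 : MvPolynomial σ ℂ) = 0 := by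
  induction l with
  | nil => rfl
  | cons w l ih => rw [shiftList_cons, ih, shiftOp, map_zero, sub_zero]

theorem realEval_shiftList_of_dirDeriv_dirDeriv_eq_zero {l : List (σ → ℝ)} {P : MvPolynomial σ ℂ}
    (h : ∀ w ∈ l, dirDeriv w (dirDeriv w P) = 0) (z : σ → ℝ) :
    realEval z (shiftList l P) = realEval (z - l.sum) P := by
  induction l generalizing z with
  | nil => simp [shiftList]
  | cons w l ih =>
    rw [List.forall_mem_cons] at h
    have hw : dirDeriv w (dirDeriv w (shiftList l P)) = 0 := by
      rw [dirDeriv_shiftList, dirDeriv_shiftList, h.1, shiftList_zero]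
    rw [shiftList_cons, realEval_shiftOp_of_dirDeriv_dirDeriv_eq_zero hw, ih h.2, List.sum_cons,
      sub_sub]

end Affine

section WithBasis

open Matrix

variable {n Λ : Type*}

/-- The indicator of the basis vectors in the family `withBasis v`. -/
def basisDir (n Λ : Type*) : n ⊕ Λ → ℝ := Sum.elim 1 0

theorem basisDir_nonneg : 0 ≤ basisDir n Λ := by
  rintro (a | a) <;> simp [basisDir]

variable [DecidableEq n]

/-- The family `v` extended by the standard basis. The extension makes `mixedDet` real stable, and
the basis weights play the role of the variable of the characteristic polynomial. -/
def withBasis (v : Λ → n → ℂ) : n ⊕ Λ → n → ℂ := Sum.elim (fun i ↦ Pi.single i 1) v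

variable [Fintype n]

theorem star_withBasis_inl_dotProduct (v : Λ → n → ℂ) (i : n) (u : n → ℂ) :
    star (withBasis v (Sum.inl i)) ⬝ᵥ u = u i := by
  simp [withBasis, dotProduct, Pi.single_apply]

variable [Fintype Λ] {v : Λ → n → ℂ} {y : n ⊕ Λ → ℝ}

theorem realStable_mixedDet_withBasis (v : Λ → n → ℂ) : RealStable (mixedDet (withBasis v)) :=
  realStable_mixedDet fun u hu ↦ funext fun i ↦ by
    rw [← star_withBasis_inl_dotProduct v i u, hu, Pi.zero_apply]

theorem smul_basisDir_sub_dotProduct_coeffSq (v : Λ → n → ℂ) (x : ℝ) (y : n ⊕ Λ → ℝ) (u : n → ℂ) :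
    (x • basisDir n Λ - y) ⬝ᵥ coeffSq (withBasis v) u =
      x * sqNorm u - y ⬝ᵥ coeffSq (withBasis v) u := by
  rw [sub_dotProduct, smul_dotProduct, smul_eq_mul]
  have hbasis : basisDir n Λ ⬝ᵥ coeffSq (withBasis v) u = sqNorm u := by
    rw [dotProduct, Fintype.sum_sum_type]
    simp only [coeffSq, star_withBasis_inl_dotProduct]
    simp [basisDir, sqNorm]
  rw [hbasis]

theorem rankOneSum_basisDir (v : Λ → n → ℂ) :
    rankOneSum (withBasis v) (fun a ↦ basisDir n Λ a) = 1 := by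
  ext i j
  simp [rankOneSum, Fintype.linearCombination_apply, Matrix.sum_apply, basisDir, withBasis,
    vecMulVec_apply, Pi.single_apply, one_apply]

theorem realEval_shiftList_withBasis_pos {l : List (n ⊕ Λ → ℝ)} (hl : ∀ w ∈ l, 0 ≤ w)
    {δ ε d x : ℝ} (hε : 0 ≤ ε) (hd : 1 < d)
    (hsum : ∀ u, l.sum ⬝ᵥ coeffSq (withBasis v) u ≤ δ * sqNorm u)
    (hsmall : ∀ w ∈ l, (w ⬝ᵥ fun a ↦ sqNorm (withBasis v a)) ≤ ε)
    (hx : d * δ + ε * d / (d - 1) < x) :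
    0 < realEval (x • basisDir n Λ) (shiftList l (mixedDet (withBasis v))) := by
  have hd0 : 0 < d := one_pos.trans hd
  have hc : ε * d / (d - 1) < x - d * δ := lt_sub_iff_add_lt'.2 hx
  have hc0 : 0 < x - d * δ :=
    (div_nonneg (mul_nonneg hε hd0.le) (sub_nonneg.2 hd.le)).trans_lt hc
  have hgap : HasGap (withBasis v) (x • basisDir n Λ - d • l.sum) (x - d * δ) := fun u ↦ by
    rw [smul_basisDir_sub_dotProduct_coeffSq, smul_dotProduct, smul_eq_mul, sub_mul, mul_assoc]
    exact sub_le_sub_left (mul_le_mul_of_nonneg_left (hsum u) hd0.le) _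
  have hbarrier : ∀ w ∈ l,
      barrier w (mixedDet (withBasis v)) (x • basisDir n Λ - d • l.sum) ≤ 1 - 1 / d := by
    intro w hw
    refine (hgap.barrier_le hc0 (hl w hw)).trans ((div_le_div_of_nonneg_right (hsmall w hw)
      hc0.le).trans ?_)
    rw [div_lt_iff₀ (sub_pos.2 hd)] at hc
    rw [one_sub_div hd0.ne', div_le_div_iff₀ hc0 hd0, mul_comm (d - 1)]
    exact hc.le
  have habove := (realStable_mixedDet_withBasis v).isAbove_shiftList (hgap.isAbove hc0) hl hd0
    hbarrier
  rw [sub_add_cancel] at habove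
  exact habove.pos

theorem exists_forall_realEval_shiftList_withBasis_pos (v : Λ → n → ℂ) (l : List (n ⊕ Λ → ℝ))
    (hl : ∀ w ∈ l, 0 ≤ w) : ∃ x₀ : ℝ, ∀ x : ℝ, x₀ < x →
      0 < realEval (x • basisDir n Λ) (shiftList l (mixedDet (withBasis v))) := by
  have hs : 0 ≤ l.sum := List.sum_nonneg hl
  have hnorm : (0 : n ⊕ Λ → ℝ) ≤ fun a ↦ sqNorm (withBasis v a) := fun a ↦ sqNorm_nonneg _
  set B := l.sum ⬝ᵥ fun a ↦ sqNorm (withBasis v a) with hB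
  refine ⟨2 * B + B * 2 / (2 - 1), fun x hx ↦ realEval_shiftList_withBasis_pos hl
    (dotProduct_nonneg_of_nonneg hs hnorm) one_lt_two (fun u ↦ ?_) (fun w hw ↦ ?_) hx⟩
  · rw [hB, dotProduct, dotProduct, Finset.sum_mul]
    refine Finset.sum_le_sum fun a _ ↦ ?_
    rw [mul_assoc]
    exact mul_le_mul_of_nonneg_left (coeffSq_le _ _ _) (hs a)
  · exact dotProduct_le_dotProduct_of_nonneg_right (List.single_le_sum hl w hw) hnorm

omit [Fintype Λ] in
theorem re_star_dotProduct_mulVec_le_of_det_ne_zero {M : Matrix n n ℂ} (hM : M.IsHermitian) {b : ℝ}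
    (h : ∀ x : ℝ, b < x → ((x : ℂ) • 1 - M).det ≠ 0) (u : n → ℂ) :
    (star u ⬝ᵥ (M *ᵥ u)).re ≤ b * sqNorm u := by
  have hN : ((b : ℂ) • 1 - M).IsHermitian := by
    refine IsHermitian.sub ?_ hM
    simp [IsHermitian]
  have hpsd : ((b : ℂ) • 1 - M).PosSemidef := by
    refine hN.posSemidef_iff_eigenvalues_nonneg.2 fun i ↦ ?_
    by_contra! hneg
    refine h (b - hN.eigenvalues i) (lt_sub_iff_add_lt.2 (add_lt_of_neg_right b hneg)) <|
      exists_mulVec_eq_zero_iff.1 ⟨(hN.eigenvectorBasis i).ofLp, ?_, ?_⟩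
    · simpa using hN.eigenvectorBasis.toBasis.ne_zero i
    · have heigen := hN.mulVec_eigenvectorBasis i
      rw [sub_mulVec, smul_mulVec, one_mulVec] at heigen ⊢
      rw [Complex.ofReal_sub, sub_smul, sub_right_comm, heigen]
      simp
  have hnonneg := (Complex.nonneg_iff.1 (hpsd.dotProduct_mulVec_nonneg u)).1
  simpa [sub_mulVec, smul_mulVec, dotProduct_sub, star_dotProduct_self] using hnonneg

theorem dotProduct_coeffSq_withBasis_le {b : ℝ}
    (h : ∀ x : ℝ, b < x → 0 < realEval (x • basisDir n Λ - y) (mixedDet (withBasis v)))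
    (u : n → ℂ) :
    y ⬝ᵥ coeffSq (withBasis v) u ≤ b * sqNorm u := by
  have hdet : ∀ x : ℝ, b < x → ((x : ℂ) • 1 - rankOneSum (withBasis v) fun a ↦ y a).det ≠ 0 := by
    intro x hx
    rw [← rankOneSum_basisDir v, ← map_smul, ← map_sub]
    have hweights : ((x : ℂ) • fun a ↦ (basisDir n Λ a : ℂ)) - (fun a ↦ (y a : ℂ)) =
        fun a ↦ ((x • basisDir n Λ - y) a : ℂ) := by
      ext a
      simp
    rw [hweights, ← ofReal_realEval_mixedDet]
    exact Complex.ofReal_ne_zero.2 (h x hx).ne'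
  have hle := re_star_dotProduct_mulVec_le_of_det_ne_zero (isHermitian_rankOneSum _ y) hdet u
  rwa [star_dotProduct_rankOneSum_ofReal, Complex.ofReal_re] at hle

end WithBasis

section Selection

open Matrix

variable {n J K : Type*} [Fintype n] [Fintype J] [Fintype K] [Nonempty K]

theorem exists_choice_sum_normSq_le (v : J → K → n → ℂ) {p : J → K → ℝ}
    (hp : 0 ≤ p) (hp1 : ∀ j, ∑ k, p j k = 1) {δ ε d : ℝ} (hε : 0 ≤ ε) (hd : 1 < d)
    (hsum : ∀ u, ∑ j, ∑ k, p j k * Complex.normSq (star (v j k) ⬝ᵥ u) ≤ δ * sqNorm u)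
    (hsmall : ∀ j, ∑ k, p j k * sqNorm (v j k) ≤ ε) :
    ∃ f : J → K, ∀ u, ∑ j, Complex.normSq (star (v j (f j)) ⬝ᵥ u) ≤
      (d * δ + ε * d / (d - 1)) * sqNorm u := by
  classical
  let dir : J → K → n ⊕ J × K → ℝ := fun j k ↦ Pi.single (Sum.inr (j, k)) 1
  have hdir : 0 ≤ dir := fun j k ↦
    (Pi.single_nonneg.2 zero_le_one : (0 : n ⊕ J × K → ℝ) ≤ Pi.single (Sum.inr (j, k)) 1)
  let mean : J → n ⊕ J × K → ℝ := fun j ↦ ∑ k, p j k • dir j k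
  have hmean : ∀ w ∈ Finset.univ.toList.map mean, 0 ≤ w := by
    refine List.forall_mem_map.2 fun j _ ↦ Finset.sum_nonneg fun k _ ↦ ?_
    exact smul_nonneg (hp j k) (hdir j k)
  obtain ⟨f, hf⟩ := (realStable_mixedDet_withBasis _).exists_choice hp hp1 hdir basisDir_nonneg
    (exists_forall_realEval_shiftList_withBasis_pos fun jk : J × K ↦ v jk.1 jk.2)
    (Finset.nodup_toList Finset.univ) fun x hx ↦
      realEval_shiftList_withBasis_pos hmean hε hd
        (fun u ↦ by
          simpa [mean, dir, sum_dotProduct, smul_dotProduct, coeffSq, withBasis] using hsum u)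
        (List.forall_mem_map.2 fun j _ ↦ by
          simpa [mean, dir, sum_dotProduct, smul_dotProduct, withBasis] using hsmall j) hx
  refine ⟨f, fun u ↦ ?_⟩
  have hle := dotProduct_coeffSq_withBasis_le (v := fun jk : J × K ↦ v jk.1 jk.2)
    (y := ∑ j, dir j (f j)) (b := d * δ + ε * d / (d - 1)) (fun x hx ↦ ?_) u
  · simpa [dir, sum_dotProduct, coeffSq, withBasis] using hle
  · have hpos := hf x hx
    rwa [realEval_shiftList_of_dirDeriv_dirDeriv_eq_zero (List.forall_mem_map.2 fun j _ ↦
      dirDeriv_single_dirDeriv_single_mixedDet _ _), Finset.sum_map_toList] at hpos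

end Selection

section Coloring

open Matrix

variable {ι m K : Type*} [Fintype m] [DecidableEq K]

/-- The copy of the vector `x` in the summand of `⨁ k : K, ℂ^m` with index `c`. -/
def taggedVec (x : m → ℂ) (c : K) : m × K → ℂ := fun a ↦ if a.2 = c then x a.1 else 0

variable [Fintype K]

theorem star_taggedVec_dotProduct (x : m → ℂ) (c : K) (u : m × K → ℂ) :
    star (taggedVec x c) ⬝ᵥ u = star x ⬝ᵥ fun a ↦ u (a, c) := by
  simp [taggedVec, dotProduct, Fintype.sum_prod_type, apply_ite]

theorem sqNorm_taggedVec (x : m → ℂ) (c : K) : sqNorm (taggedVec x c) = sqNorm x := by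
  simp [taggedVec, sqNorm, Fintype.sum_prod_type, apply_ite]

omit [DecidableEq K] in
theorem sqNorm_prod (u : m × K → ℂ) : sqNorm u = ∑ c, sqNorm fun a ↦ u (a, c) := by
  simp only [sqNorm, Fintype.sum_prod_type_right]

theorem exists_coloring_sum_normSq_le [Fintype ι] [Nonempty K] {x : ι → m → ℂ} {α : ℝ}
    (hα : 0 ≤ α) (hx : ∀ i, sqNorm (x i) ≤ α)
    (hsum : ∀ u, ∑ i, Complex.normSq (star (x i) ⬝ᵥ u) ≤ sqNorm u) :
    ∃ f : ι → K, ∀ t u, ∑ i with f i = t, Complex.normSq (star (x i) ⬝ᵥ u) ≤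
      (α + 1 / Fintype.card K + (1 + α) / √(Fintype.card K)) * sqNorm u := by
  set k := (Fintype.card K : ℝ) with hk
  have hk0 : 0 < k := Nat.cast_pos.2 Fintype.card_pos
  have hsqrt : 0 < √k := Real.sqrt_pos.2 hk0
  -- Colour `t` is controlled by testing the selected copies against vectors tagged by `t`.
  obtain ⟨f, hf⟩ := exists_choice_sum_normSq_le (fun i (c : K) ↦ taggedVec (x i) c)
    (p := fun _ _ ↦ 1 / k) (fun _ _ ↦ one_div_nonneg.2 hk0.le)
    (fun _ ↦ by simp [← hk, hk0.ne']) (δ := 1 / k) (d := 1 + √k) hα (lt_add_of_pos_right 1 hsqrt)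
    (fun u ↦ by
      simp only [star_taggedVec_dotProduct, ← Finset.mul_sum]
      rw [Finset.sum_comm, sqNorm_prod]
      exact mul_le_mul_of_nonneg_left (Finset.sum_le_sum fun c _ ↦ hsum _)
        (one_div_nonneg.2 hk0.le))
    (fun i ↦ by simpa [sqNorm_taggedVec, ← hk, hk0.ne'] using hx i)
  have hbound : (1 + √k) * (1 / k) + α * (1 + √k) / (1 + √k - 1) = α + 1 / k + (1 + α) / √k := by
    have hsq := Real.sq_sqrt hk0.le
    rw [add_sub_cancel_left]
    field_simp
    linear_combination hsq
  rw [hbound] at hf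
  refine ⟨f, fun t u ↦ ?_⟩
  calc ∑ i with f i = t, Complex.normSq (star (x i) ⬝ᵥ u)
      = ∑ i, Complex.normSq (star (taggedVec (x i) (f i)) ⬝ᵥ taggedVec u t) := by
        rw [Finset.sum_filter]
        refine Finset.sum_congr rfl fun i _ ↦ ?_
        rw [star_taggedVec_dotProduct]
        by_cases h : f i = t <;> simp [taggedVec, h, dotProduct]
    _ ≤ _ := (hf (taggedVec u t)).trans_eq (by rw [sqNorm_taggedVec])

end Coloring

section Support

open Matrix

variable {m ι : Type*} [Fintype m] [Fintype ι]

theorem sqNorm_indicator (S : Finset ι) (u : ι → ℂ) :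
    sqNorm ((S : Set ι).indicator u) = ∑ i ∈ S, Complex.normSq (u i) := by
  classical
  simp [sqNorm, Set.indicator_apply, apply_ite, Finset.sum_ite_mem]

theorem sum_normSq_le_sqNorm (S : Finset ι) (u : ι → ℂ) :
    ∑ i ∈ S, Complex.normSq (u i) ≤ sqNorm u :=
  Finset.sum_le_univ_sum_of_nonneg fun _ ↦ Complex.normSq_nonneg _

theorem indicator_dotProduct (S : Set ι) (u v : ι → ℂ) :
    S.indicator u ⬝ᵥ v = u ⬝ᵥ S.indicator v := by
  classical
  simp [dotProduct, Set.indicator_apply]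

theorem normSq_dotProduct_le_of_support_subset {S : Finset ι} {u v : ι → ℂ}
    (hv : Function.support v ⊆ S) :
    Complex.normSq (u ⬝ᵥ v) ≤ (∑ i ∈ S, Complex.normSq (u i)) * sqNorm v := by
  rw [← sqNorm_indicator, ← Set.indicator_eq_self.2 hv, ← indicator_dotProduct,
    Set.indicator_eq_self.2 hv]
  exact normSq_dotProduct_le _ _

theorem sqNorm_mulVec_le_of_support_subset {B : Matrix m ι ℂ} {S : Finset ι} {c : ℝ} (hc : 0 ≤ c)
    (h : ∀ w, ∑ i ∈ S, Complex.normSq ((Bᴴ *ᵥ w) i) ≤ c * sqNorm w) {u : ι → ℂ}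
    (hu : Function.support u ⊆ S) : sqNorm (B *ᵥ u) ≤ c * sqNorm u := by
  set y := B *ᵥ u
  have hself : star (Bᴴ *ᵥ y) ⬝ᵥ u = sqNorm y := by
    rw [star_mulVec, conjTranspose_conjTranspose, ← dotProduct_mulVec, star_dotProduct_self]
  have hcauchy : sqNorm y * sqNorm y ≤ c * sqNorm y * sqNorm u := by
    rw [← Complex.normSq_ofReal, ← hself]
    refine (normSq_dotProduct_le_of_support_subset hu).trans
      (mul_le_mul_of_nonneg_right ?_ (sqNorm_nonneg u))
    simpa using h y
  rcases (sqNorm_nonneg y).eq_or_lt with hzero | hpos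
  · rw [← hzero]
    exact mul_nonneg hc (sqNorm_nonneg u)
  · rw [mul_right_comm] at hcauchy
    exact le_of_mul_le_mul_right hcauchy hpos

theorem sqNorm_conjTranspose_mulVec_le {B : Matrix m ι ℂ} {c : ℝ} (hc : 0 ≤ c)
    (h : ∀ u, sqNorm (B *ᵥ u) ≤ c * sqNorm u) (w : m → ℂ) :
    sqNorm (Bᴴ *ᵥ w) ≤ c * sqNorm w :=
  sqNorm_mulVec_le_of_support_subset (S := Finset.univ) hc
    (by simpa only [conjTranspose_conjTranspose, sqNorm] using h)
    fun _ _ ↦ Finset.mem_coe.2 (Finset.mem_univ _)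

end Support

section FormLE

open Matrix

variable {ι : Type*} [Fintype ι] {A : Matrix ι ι ℂ} {S T : Finset ι} {b c : ℝ}

/-- The principal submatrix `A(S)` of the Hermitian matrix `A` is at most `b` in the Loewner order,
that is, its largest eigenvalue is at most `b`. The vectors of `ℂ^S` are encoded as the vectors of
`ℂ^ι` with support in `S`. -/
def FormLE (A : Matrix ι ι ℂ) (S : Finset ι) (b : ℝ) : Prop :=
  ∀ u : ι → ℂ, Function.support u ⊆ S → (star u ⬝ᵥ (A *ᵥ u)).re ≤ b * sqNorm u

theorem FormLE.mono (h : FormLE A S b) (hTS : T ⊆ S) (hbc : b ≤ c) : FormLE A T c := fun u hu ↦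
  (h u (hu.trans (Finset.coe_subset.2 hTS))).trans
    (mul_le_mul_of_nonneg_right hbc (sqNorm_nonneg u))

theorem re_star_add_dotProduct_mulVec_add (hA : A.IsHermitian) (x y : ι → ℂ) :
    (star (x + y) ⬝ᵥ (A *ᵥ (x + y))).re = (star x ⬝ᵥ (A *ᵥ x)).re + (star y ⬝ᵥ (A *ᵥ y)).re +
      2 * (star y ⬝ᵥ (A *ᵥ x)).re := by
  have hcross : star x ⬝ᵥ (A *ᵥ y) = star (star y ⬝ᵥ (A *ᵥ x)) := by
    rw [star_dotProduct, star_mulVec, hA.eq, ← dotProduct_mulVec]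
  rw [star_add, mulVec_add, add_dotProduct, dotProduct_add, dotProduct_add, hcross]
  simp only [Complex.add_re, Complex.star_def, Complex.conj_re]
  ring

theorem FormLE.union [DecidableEq ι] (hA : A.IsHermitian) {a : ℝ} (hS : FormLE A S a)
    (hT : FormLE A T a) (hST : Disjoint S T) (hc : 0 ≤ c)
    (h : ∀ u, Function.support u ⊆ S →
      ∑ i ∈ T, Complex.normSq ((A *ᵥ u) i) ≤ c * sqNorm u) :
    FormLE A (S ∪ T) (a + √c) := by
  intro u hu
  set x := (S : Set ι).indicator u with hx
  set y := (T : Set ι).indicator u with hy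
  have hxS : Function.support x ⊆ S := Set.support_indicator_subset
  have hyT : Function.support y ⊆ T := Set.support_indicator_subset
  have hadd : u = x + y := by
    rw [← Set.indicator_eq_self.2 hu, Finset.coe_union,
      Set.indicator_union_of_disjoint (Finset.disjoint_coe.2 hST)]
    rfl
  have hnorm : sqNorm u = sqNorm x + sqNorm y := by
    rw [hx, hy, sqNorm_indicator, sqNorm_indicator, ← Finset.sum_union hST, ← sqNorm_indicator,
      Set.indicator_eq_self.2 hu]
  have hcross : (star y ⬝ᵥ (A *ᵥ x)).re ≤ √c * ((sqNorm x + sqNorm y) / 2) := by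
    have hsq : (star y ⬝ᵥ (A *ᵥ x)).re ^ 2 ≤ c * sqNorm x * sqNorm y := by
      rw [sq, dotProduct_comm, ← sqNorm_star y]
      refine (Complex.re_sq_le_normSq _).trans
        ((normSq_dotProduct_le_of_support_subset ?_).trans
          (mul_le_mul_of_nonneg_right (h x hxS) (sqNorm_nonneg _)))
      exact fun i hi ↦ hyT (star_ne_zero.1 hi)
    rw [← Real.sqrt_sq (div_nonneg (add_nonneg (sqNorm_nonneg x) (sqNorm_nonneg y)) zero_le_two),
      ← Real.sqrt_mul hc]
    refine Real.le_sqrt_of_sq_le (hsq.trans ?_)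
    nlinarith [mul_nonneg hc (sq_nonneg (sqNorm x - sqNorm y))]
  rw [hnorm, hadd, re_star_add_dotProduct_mulVec_add hA]
  linarith [hS x hxS, hT y hyT]

end FormLE

section Contraction

open Matrix

variable {ι : Type*} [Fintype ι] {A : Matrix ι ι ℂ}

theorem star_dotProduct_conjTranspose_mul_self_mulVec {m : Type*} [Fintype m] (B : Matrix m ι ℂ)
    (u : ι → ℂ) : star u ⬝ᵥ ((Bᴴ * B) *ᵥ u) = sqNorm (B *ᵥ u) := by
  rw [← star_dotProduct_self, ← mulVec_mulVec, dotProduct_mulVec, star_mulVec]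

variable [DecidableEq ι]

open scoped MatrixOrder in
theorem exists_contraction_eq_conjTranspose_mul_self (hA : A.PosSemidef)
    (hAc : (1 - A).PosSemidef) :
    ∃ B : Matrix ι ι ℂ, A = Bᴴ * B ∧ ∀ u, sqNorm (B *ᵥ u) ≤ 1 * sqNorm u := by
  obtain ⟨B, rfl⟩ : ∃ B : Matrix ι ι ℂ, A = Bᴴ * B :=
    CStarAlgebra.nonneg_iff_eq_star_mul_self.1 hA.nonneg
  refine ⟨B, rfl, fun u ↦ ?_⟩
  have hnonneg := (Complex.nonneg_iff.1 (hAc.dotProduct_mulVec_nonneg u)).1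
  rw [sub_mulVec, one_mulVec, dotProduct_sub, star_dotProduct_self,
    star_dotProduct_conjTranspose_mul_self_mulVec, Complex.sub_re, Complex.ofReal_re,
    Complex.ofReal_re] at hnonneg
  rw [one_mul]
  exact sub_nonneg.1 hnonneg

theorem exists_coloring_formLE {K : Type*} [Fintype K] [DecidableEq K] [Nonempty K]
    (hA : A.PosSemidef) (hAc : (1 - A).PosSemidef) {α : ℝ} (hα : 0 ≤ α)
    (hdiag : ∀ i, (A i i).re ≤ α) :
    ∃ f : ι → K, ∀ t,
      FormLE A {i | f i = t} (α + 1 / Fintype.card K + (1 + α) / √(Fintype.card K)) := by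
  obtain ⟨B, rfl, hB⟩ := exists_contraction_eq_conjTranspose_mul_self hA hAc
  have hB' : ∀ u, sqNorm (Bᴴ *ᵥ u) ≤ sqNorm u := fun u ↦
    (sqNorm_conjTranspose_mulVec_le zero_le_one hB u).trans_eq (one_mul _)
  have hcol : ∀ i, sqNorm (fun a ↦ B a i) = ((Bᴴ * B) i i).re := fun i ↦ by
    simp [sqNorm, mul_apply, Complex.normSq_apply]
  obtain ⟨f, hf⟩ := exists_coloring_sum_normSq_le (K := K) (x := fun i a ↦ B a i) hα
    (fun i ↦ (hcol i).trans_le (hdiag i)) hB'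
  refine ⟨f, fun t u hu ↦ ?_⟩
  rw [star_dotProduct_conjTranspose_mul_self_mulVec, Complex.ofReal_re]
  exact sqNorm_mulVec_le_of_support_subset (by positivity) (hf t) hu

end Contraction

section OffDiagonal

open Matrix

theorem exists_subset_sum_normSq_le {ι m : Type*} [Fintype m] {x : ι → m → ℂ} {W : Finset ι}
    {δ τ : ℝ} (hτ : 0 ≤ τ) (hsmall : ∀ i ∈ W, sqNorm (x i) ≤ τ)
    (hsum : ∀ u, ∑ i ∈ W, Complex.normSq (star (x i) ⬝ᵥ u) ≤ δ * sqNorm u) {q g : ℕ} (hg : 0 < g)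
    (hqg : q * g ≤ W.card) :
    ∃ R ⊆ W, R.card = q ∧ ∀ u, ∑ i ∈ R, Complex.normSq (star (x i) ⬝ᵥ u) ≤
      (2 * δ / g + 2 * τ) * sqNorm u := by
  classical
  have hg0 : (0 : ℝ) < g := Nat.cast_pos.2 hg
  have : Nonempty (Fin g) := ⟨⟨0, hg⟩⟩
  -- One vector is selected in each of `q` disjoint groups of size `g`.
  obtain ⟨group⟩ : Nonempty (Fin q × Fin g ↪ W) :=
    Function.Embedding.nonempty_of_card_le (by simpa using hqg)
  let idx : Fin q × Fin g ↪ ι := group.trans (Function.Embedding.subtype _)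
  have hidx : ∀ jk, idx jk ∈ W := fun jk ↦ (group jk).2
  obtain ⟨f, hf⟩ := exists_choice_sum_normSq_le (fun j k ↦ x (idx (j, k)))
    (p := fun _ _ ↦ 1 / (g : ℝ)) (fun _ _ ↦ one_div_nonneg.2 hg0.le) (fun _ ↦ by simp [hg0.ne'])
    (δ := δ / g) (ε := τ) (d := 2) hτ one_lt_two
    (fun u ↦ by
      have hgroups : ∑ jk, Complex.normSq (star (x (idx jk)) ⬝ᵥ u) ≤
          ∑ i ∈ W, Complex.normSq (star (x i) ⬝ᵥ u) := by
        rw [← Finset.sum_map Finset.univ idx fun i ↦ Complex.normSq (star (x i) ⬝ᵥ u)]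
        refine Finset.sum_le_sum_of_subset_of_nonneg (fun i hi ↦ ?_)
          fun _ _ _ ↦ Complex.normSq_nonneg _
        obtain ⟨jk, -, rfl⟩ := Finset.mem_map.1 hi
        exact hidx jk
      simp only [← Finset.mul_sum]
      rw [← Fintype.sum_prod_type' fun j k ↦ Complex.normSq (star (x (idx (j, k))) ⬝ᵥ u),
        one_div_mul_eq_div, div_mul_eq_mul_div]
      exact div_le_div_of_nonneg_right (hgroups.trans (hsum u)) hg0.le)
    (fun j ↦ by
      rw [← Finset.mul_sum, one_div_mul_eq_div, div_le_iff₀' hg0]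
      simpa using Finset.sum_le_card_nsmul Finset.univ _ τ fun k _ ↦ hsmall _ (hidx (j, k)))
  let sel : Fin q ↪ ι := ⟨fun j ↦ idx (j, f j), fun i j hij ↦ congrArg Prod.fst (idx.injective hij)⟩
  refine ⟨Finset.univ.map sel, ?_, by simp, fun u ↦ ?_⟩
  · intro i hi
    obtain ⟨j, -, rfl⟩ := Finset.mem_map.1 hi
    exact hidx (j, f j)
  · rw [Finset.sum_map]
    refine (hf u).trans_eq ?_
    ring

variable {ι : Type*} [Fintype ι] [DecidableEq ι] {A : Matrix ι ι ℂ} {L W : Finset ι}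

theorem sqNorm_mulVec_le_re_star_dotProduct (hA : A.PosSemidef) (hAc : (1 - A).PosSemidef)
    (u : ι → ℂ) : sqNorm (A *ᵥ u) ≤ (star u ⬝ᵥ (A *ᵥ u)).re := by
  obtain ⟨B, rfl, hB⟩ := exists_contraction_eq_conjTranspose_mul_self hA hAc
  rw [star_dotProduct_conjTranspose_mul_self_mulVec, Complex.ofReal_re, ← mulVec_mulVec]
  exact (sqNorm_conjTranspose_mulVec_le zero_le_one hB _).trans_eq (one_mul _)

theorem sqNorm_two_smul_mulVec_sub_le (hA : A.PosSemidef) (hAc : (1 - A).PosSemidef)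
    (u : ι → ℂ) : sqNorm ((2 : ℂ) • (A *ᵥ u) - u) ≤ sqNorm u := by
  set x := A *ᵥ u
  have hexpand : sqNorm ((2 : ℂ) • x - u) = 4 * (sqNorm x - (star u ⬝ᵥ x).re) + sqNorm u := by
    simp only [sqNorm, dotProduct, Complex.re_sum, Finset.mul_sum, ← Finset.sum_sub_distrib,
      ← Finset.sum_add_distrib]
    refine Finset.sum_congr rfl fun i _ ↦ ?_
    simp [Complex.normSq_apply]
    ring
  linarith [sqNorm_mulVec_le_re_star_dotProduct hA hAc u]

theorem sum_normSq_mulVec_le (hA : A.PosSemidef) (hAc : (1 - A).PosSemidef) {u : ι → ℂ}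
    (hu : ∀ i ∈ W, u i = 0) : ∑ i ∈ W, Complex.normSq ((A *ᵥ u) i) ≤ sqNorm u / 4 := by
  -- On `W` the vectors `2 • A *ᵥ u` and `(2 • A - 1) *ᵥ u` agree.
  have hle := (sum_normSq_le_sqNorm W _).trans (sqNorm_two_smul_mulVec_sub_le hA hAc u)
  have hagree : ∑ i ∈ W, Complex.normSq (((2 : ℂ) • (A *ᵥ u) - u) i) =
      4 * ∑ i ∈ W, Complex.normSq ((A *ᵥ u) i) := by
    rw [Finset.mul_sum]
    refine Finset.sum_congr rfl fun i hi ↦ ?_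
    rw [Pi.sub_apply, hu i hi, sub_zero, Pi.smul_apply, smul_eq_mul, Complex.normSq_mul]
    norm_num
  linarith

theorem exists_subset_offDiagonal_le (hA : A.PosSemidef) (hAc : (1 - A).PosSemidef)
    (hLW : Disjoint L W) {τ : ℝ} (hτ : 0 ≤ τ)
    (hW : ∀ i ∈ W, ∑ l ∈ L, Complex.normSq (A i l) ≤ τ) {q g : ℕ} (hg : 0 < g)
    (hqg : q * g ≤ W.card) :
    ∃ R ⊆ W, R.card = q ∧ ∀ u, Function.support u ⊆ L →
      ∑ i ∈ R, Complex.normSq ((A *ᵥ u) i) ≤ (1 / (2 * g) + 2 * τ) * sqNorm u := by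
  let row : ι → ι → ℂ := fun i ↦ (L : Set ι).indicator (star (A i))
  have hrow : ∀ i u, star (row i) ⬝ᵥ u = (A *ᵥ (L : Set ι).indicator u) i := fun i u ↦ by
    rw [mulVec, ← indicator_dotProduct]
    congr 1
    ext l
    by_cases hl : l ∈ L <;> simp [row, hl]
  obtain ⟨R, hRW, hRq, hR⟩ := exists_subset_sum_normSq_le (x := row) (δ := 1 / 4) hτ
    (fun i hi ↦ by simpa [row, sqNorm_indicator] using hW i hi)
    (fun u ↦ by
      simp only [hrow]
      refine (sum_normSq_mulVec_le hA hAc fun i hi ↦ ?_).trans ?_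
      · simp [Finset.disjoint_right.1 hLW hi]
      · rw [sqNorm_indicator]
        linarith [sum_normSq_le_sqNorm L u])
    hg hqg
  refine ⟨R, hRW, hRq, fun u hu ↦ ?_⟩
  have hle := hR u
  simp only [hrow, Set.indicator_eq_self.2 hu] at hle
  refine hle.trans_eq ?_
  ring

omit [Fintype ι] in
theorem mul_card_filter_lt_le [Finite ι] (hA : A.PosSemidef) (hAc : (1 - A).PosSemidef)
    (hLW : Disjoint L W) (τ : ℝ) :
    τ * (W.filter fun i ↦ τ < ∑ l ∈ L, Complex.normSq (A i l)).card ≤ L.card / 4 := by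
  cases nonempty_fintype ι
  have hcol : ∀ l ∈ L, ∑ i ∈ W, Complex.normSq (A i l) ≤ 1 / 4 := fun l hl ↦ by
    have hle := sum_normSq_mulVec_le (W := W) (u := Pi.single l 1) hA hAc fun i hi ↦
      Pi.single_eq_of_ne (Finset.disjoint_iff_ne.1 hLW l hl i hi).symm _
    simpa [sqNorm, Pi.single_apply, apply_ite] using hle
  have htotal : ∑ i ∈ W, ∑ l ∈ L, Complex.normSq (A i l) ≤ L.card / 4 := by
    rw [Finset.sum_comm, div_eq_mul_one_div, ← nsmul_eq_mul]
    exact Finset.sum_le_card_nsmul _ _ _ hcol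
  refine le_trans ?_ htotal
  rw [mul_comm, ← nsmul_eq_mul]
  refine (Finset.card_nsmul_le_sum _ _ _ fun i hi ↦ (Finset.mem_filter.1 hi).2.le).trans ?_
  exact Finset.sum_le_sum_of_subset_of_nonneg (Finset.filter_subset _ _) fun _ _ _ ↦
    Finset.sum_nonneg fun _ _ ↦ Complex.normSq_nonneg _

end OffDiagonal

section Extension

open Matrix

theorem exists_group_size {p N : ℕ} (hp : 0 < p) {x : ℝ} (hx : 0 < x) (hN : x + p ≤ N) :
    ∃ g : ℕ, 0 < g ∧ p * g ≤ N ∧ 1 / (g : ℝ) ≤ p / x := by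
  have hlt : (N : ℝ) < p * ((N / p : ℕ) + 1) := by exact_mod_cast Nat.lt_mul_div_succ N hp
  have hxg : x ≤ p * (N / p : ℕ) := by linarith
  have hp0 : (0 : ℝ) < p := Nat.cast_pos.2 hp
  have hg : (0 : ℝ) < (N / p : ℕ) := pos_of_mul_pos_right (hx.trans_le hxg) hp0.le
  refine ⟨N / p, Nat.cast_pos.1 hg, Nat.mul_div_le _ _, ?_⟩
  rwa [div_le_div_iff₀ hg hx, one_mul]

variable {ι : Type*} [Fintype ι] [DecidableEq ι] {A : Matrix ι ι ℂ} {L W : Finset ι}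

omit [Fintype ι] in
theorem card_sub_le_card_filter_le [Finite ι] (hA : A.PosSemidef) (hAc : (1 - A).PosSemidef)
    (hLW : Disjoint L W) {τ : ℝ} (hτ : 0 < τ) :
    (W.card : ℝ) - L.card / 4 / τ ≤
      (W.filter fun i ↦ ∑ l ∈ L, Complex.normSq (A i l) ≤ τ).card := by
  have hlarge := (le_div_iff₀' hτ).2 (mul_card_filter_lt_le hA hAc hLW τ)
  have hcard := Finset.card_filter_add_card_filter_not (s := W)
    fun i ↦ ∑ l ∈ L, Complex.normSq (A i l) ≤ τ
  simp only [not_le] at hcard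
  rw [← hcard, Nat.cast_add]
  linarith

theorem exists_subset_offDiagonal_le_one_div (hA : A.PosSemidef) (hAc : (1 - A).PosSemidef)
    (hLW : Disjoint L W) (hL : L.Nonempty) {E : ℝ} (hE : 0 < E) {p n : ℕ} (hp : 0 < p)
    (hpn : L.card + p = n) (hWn : n * (E + 1) ≤ W.card) :
    ∃ R ⊆ W, R.card = p ∧ ∀ u, Function.support u ⊆ L →
      ∑ i ∈ R, Complex.normSq ((A *ᵥ u) i) ≤ 1 / E * sqNorm u := by
  have hLpos : (0 : ℝ) < L.card := Nat.cast_pos.2 hL.card_pos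
  have hn : (0 : ℝ) < n := Nat.cast_pos.2 (by lia)
  have hp_le : (p : ℝ) ≤ n := Nat.cast_le.2 (by lia)
  -- With this threshold at most half of the `n * E` spare elements of `W` are discarded.
  set τ : ℝ := L.card / (2 * n * E) with hτ
  have hτ0 : 0 < τ := div_pos hLpos (by positivity)
  set V := W.filter fun i ↦ ∑ l ∈ L, Complex.normSq (A i l) ≤ τ
  have hVW : V ⊆ W := Finset.filter_subset _ _
  have hV : n * E / 2 + p ≤ (V.card : ℝ) := by
    have hle := card_sub_le_card_filter_le hA hAc hLW hτ0
    have hdiv : (L.card : ℝ) / 4 / τ = n * E / 2 := by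
      rw [hτ]
      field_simp
      norm_num
    linarith
  obtain ⟨g, hg, hgV, hgE⟩ := exists_group_size hp (by positivity) hV
  obtain ⟨R, hRV, hRp, hRu⟩ := exists_subset_offDiagonal_le hA hAc (hLW.mono_right hVW) hτ0.le
    (fun i hi ↦ (Finset.mem_filter.1 hi).2) hg hgV
  refine ⟨R, hRV.trans hVW, hRp, fun u hu ↦
    (hRu u hu).trans (mul_le_mul_of_nonneg_right ?_ (sqNorm_nonneg u))⟩
  calc 1 / (2 * (g : ℝ)) + 2 * τ = 1 / g / 2 + 2 * τ := by ring
    _ ≤ p / (n * E / 2) / 2 + 2 * τ := by gcongr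
    _ = (L.card + p) / (n * E) := by
      rw [hτ]
      field_simp
      ring
    _ = 1 / E := by rw [← Nat.cast_add, hpn, div_mul_eq_div_div, div_self hn.ne']

theorem exists_extension (hA : A.PosSemidef) (hAc : (1 - A).PosSemidef) {a E : ℝ} {n : ℕ}
    (hL : FormLE A L a) (hW : FormLE A W a) (hLW : Disjoint L W) (hLn : L.card < n) (hE : 0 < E)
    (hWn : n * (E + 1) ≤ W.card) :
    ∃ R ⊆ W, L.card + R.card = n ∧ FormLE A (L ∪ R) (a + √(1 / E)) := by
  rcases L.eq_empty_or_nonempty with rfl | hLne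
  · obtain ⟨R, hR, hRn⟩ : ∃ R ⊆ W, R.card = n := Finset.exists_subset_card_eq <|
      Nat.cast_le.1 ((le_mul_of_one_le_right n.cast_nonneg (by linarith)).trans hWn)
    refine ⟨R, hR, by simpa using hRn, ?_⟩
    rw [Finset.empty_union]
    exact hW.mono hR (le_add_of_nonneg_right (Real.sqrt_nonneg _))
  · obtain ⟨p, hpn⟩ := Nat.exists_eq_add_of_le hLn.le
    obtain ⟨R, hR, hRp, hRu⟩ := exists_subset_offDiagonal_le_one_div hA hAc hLW hLne hE
      (by lia) hpn.symm hWn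
    exact ⟨R, hR, by rw [hRp, hpn], hL.union hA.isHermitian (hW.mono hR le_rfl)
      (hLW.mono_right hR) (one_div_nonneg.2 hE.le) hRu⟩

end Extension

section UniformPaving

open Matrix

variable {ι : Type*} [Fintype ι] [DecidableEq ι] {A : Matrix ι ι ℂ} {n : ℕ} {b c : ℝ}
  {S T : Finset ι}

/-- `S` is partitioned into sets of size `n` on which the principal submatrices of `A` are
at most `b`. -/
def HasUniformPaving (A : Matrix ι ι ℂ) (n : ℕ) (b : ℝ) (S : Finset ι) : Prop :=
  ∃ P : Finpartition S, ∀ T ∈ P.parts, T.card = n ∧ FormLE A T b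

theorem HasUniformPaving.mono (h : HasUniformPaving A n b S) (hbc : b ≤ c) :
    HasUniformPaving A n c S := by
  obtain ⟨P, hP⟩ := h
  exact ⟨P, fun T hT ↦ ⟨(hP T hT).1, (hP T hT).2.mono subset_rfl hbc⟩⟩

theorem HasUniformPaving.dvd_card (h : HasUniformPaving A n b S) : n ∣ S.card := by
  obtain ⟨P, hP⟩ := h
  rw [← P.sum_card_parts]
  exact Finset.dvd_sum fun T hT ↦ (hP T hT).1.symm.dvd

theorem HasUniformPaving.union (hS : HasUniformPaving A n b S) (hT : HasUniformPaving A n b T)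
    (hST : Disjoint S T) : HasUniformPaving A n b (S ∪ T) := by
  obtain ⟨P, hP⟩ := hS
  obtain ⟨Q, hQ⟩ := hT
  let Z : Bool → Finset ι := fun i ↦ bif i then S else T
  let F : ∀ i, Finpartition (Z i) := Bool.rec Q P
  refine ⟨(Finpartition.combine F ((Finset.supIndep_univ_bool _).2 hST.symm)).copy ?_, ?_⟩
  · simp [Z]
  · intro U hU
    simp only [Finpartition.copy_parts, Finpartition.combine_parts, Finset.mem_biUnion] at hU
    obtain ⟨_ | _, -, hU⟩ := hU
    exacts [hQ U hU, hP U hU]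

theorem FormLE.hasUniformPaving (h : FormLE A S b) (hn : n ∣ S.card) :
    HasUniformPaving A n b S := by
  obtain ⟨q, hq⟩ := hn
  have hsize : q * n + 0 * (n + 1) = S.card := by lia
  refine ⟨(⊥ : Finpartition S).equitabilise hsize, fun T hT ↦ ⟨?_, h.mono ?_ le_rfl⟩⟩
  · have hbig := Finset.card_eq_zero.1 ((⊥ : Finpartition S).card_filter_equitabilise_big hsize)
    exact (Finpartition.card_eq_of_mem_parts_equitabilise hT).resolve_right
      (Finset.filter_eq_empty_iff.1 hbig hT)
  · exact Finpartition.subset _ hT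

theorem exists_hasUniformPaving_union (hA : A.PosSemidef) (hAc : (1 - A).PosSemidef) (hn : 0 < n)
    {a E : ℝ} (hE : 0 < E) {C W : Finset ι} (hC : FormLE A C a) (hW : FormLE A W a)
    (hCW : Disjoint C W) (hWn : n * (E + 1) ≤ W.card) :
    ∃ R ⊆ W, R.card ≤ n ∧ HasUniformPaving A n (a + √(1 / E)) (C ∪ R) := by
  obtain ⟨L, hL, hLn⟩ := Finset.exists_subset_card_eq (Nat.mod_le C.card n)
  obtain ⟨R, hR, hRn, hLR⟩ := exists_extension hA hAc (hC.mono hL le_rfl) hW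
    (hCW.mono_left hL) (hLn.trans_lt (Nat.mod_lt _ hn)) hE hWn
  have hblocks : HasUniformPaving A n (a + √(1 / E)) (C \ L) :=
    (hC.mono Finset.sdiff_subset (le_add_of_nonneg_right (Real.sqrt_nonneg _))).hasUniformPaving
      (by rw [Finset.card_sdiff_of_subset hL, hLn]; exact Nat.dvd_sub_mod _)
  have hrest : HasUniformPaving A n (a + √(1 / E)) (L ∪ R) := hLR.hasUniformPaving <|
    ((Finset.card_union_of_disjoint (hCW.mono hL hR)).trans hRn).symm.dvd
  refine ⟨R, hR, by lia, ?_⟩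
  rw [← Finset.sdiff_union_of_subset hL, Finset.union_assoc]
  exact hblocks.union hrest <| Finset.disjoint_union_right.2
    ⟨Finset.sdiff_disjoint, hCW.mono Finset.sdiff_subset hR⟩

theorem hasUniformPaving_union_biUnion {κ : Type*} (hA : A.PosSemidef)
    (hAc : (1 - A).PosSemidef) (hn : 0 < n) {a E : ℝ} (hE : 0 < E) {C : κ → Finset ι}
    (hC : ∀ t, FormLE A (C t) a) (hdisj : Pairwise fun s t ↦ Disjoint (C s) (C t)) (J : Finset κ)
    {W : Finset ι} (hW : FormLE A W a) (hWC : Disjoint W (J.biUnion C))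
    (hWn : n * (E + J.card) ≤ W.card) (hdvd : n ∣ (W ∪ J.biUnion C).card) :
    HasUniformPaving A n (a + √(1 / E)) (W ∪ J.biUnion C) := by
  classical
  induction J using Finset.induction_on generalizing W with
  | empty =>
    rw [Finset.biUnion_empty, Finset.union_empty] at hdvd ⊢
    exact (hW.mono subset_rfl (le_add_of_nonneg_right (Real.sqrt_nonneg _))).hasUniformPaving hdvd
  | insert t J ht ih =>
    rw [Finset.card_insert_of_notMem ht, Nat.cast_succ] at hWn
    rw [Finset.biUnion_insert, Finset.disjoint_union_right] at hWC
    have hCJ : Disjoint (C t) (J.biUnion C) := (Finset.disjoint_biUnion_right _ _ _).2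
      fun s hs ↦ hdisj fun hts ↦ ht (hts ▸ hs)
    obtain ⟨R, hR, hRn, hCR⟩ := exists_hasUniformPaving_union hA hAc hn hE (hC t) hW hWC.1.symm
      (hWn.trans' <| by gcongr; exact le_add_of_nonneg_left J.card.cast_nonneg)
    have hrest : Disjoint (C t ∪ R) (W \ R ∪ J.biUnion C) := by
      simp only [Finset.disjoint_union_left, Finset.disjoint_union_right]
      exact ⟨⟨hWC.1.symm.mono_right Finset.sdiff_subset, Finset.disjoint_sdiff⟩,
        hCJ, hWC.2.mono_left hR⟩
    have hsplit : W ∪ (insert t J).biUnion C = (C t ∪ R) ∪ (W \ R ∪ J.biUnion C) := by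
      rw [Finset.biUnion_insert, ← Finset.sdiff_union_of_subset hR]
      ac_nf
      rw [Finset.sdiff_union_of_subset hR]
    rw [hsplit] at hdvd ⊢
    rw [Finset.card_union_of_disjoint hrest, Nat.dvd_add_right hCR.dvd_card] at hdvd
    refine hCR.union (ih (hW.mono Finset.sdiff_subset le_rfl)
      (hWC.2.mono_left Finset.sdiff_subset) ?_ hdvd) hrest
    have hRn' : (R.card : ℝ) ≤ n := Nat.cast_le.2 hRn
    rw [Finset.cast_card_sdiff hR]
    linarith

theorem hasUniformPaving_univ_of_coloring {K : Type*} [Fintype K] [DecidableEq K] [Nonempty K]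
    (hA : A.PosSemidef) (hAc : (1 - A).PosSemidef) (hn : 0 < n) (hdvd : n ∣ Fintype.card ι)
    {a E : ℝ} (hE : 0 < E) {f : ι → K} (hf : ∀ t, FormLE A {i | f i = t} a)
    (hK : Fintype.card K * (n * (E + Fintype.card K)) ≤ Fintype.card ι) :
    HasUniformPaving A n (a + √(1 / E)) Finset.univ := by
  obtain ⟨t, ht⟩ := Fintype.exists_le_card_fiber_of_nsmul_le_card f ((nsmul_eq_mul _ _).trans_le hK)
  let C : K → Finset ι := fun s ↦ {i | f i = s}
  have hdisj : Pairwise fun s t ↦ Disjoint (C s) (C t) := fun s t hst ↦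
    Finset.disjoint_filter.2 fun i _ hs ht ↦ hst (hs.symm.trans ht)
  have huniv : C t ∪ (Finset.univ.erase t).biUnion C = Finset.univ := by
    rw [← Finset.biUnion_insert, Finset.insert_erase (Finset.mem_univ t)]
    ext i
    simp [C]
  rw [← huniv]
  refine hasUniformPaving_union_biUnion hA hAc hn hE hf hdisj _ (hf t) ?_ (ht.trans' ?_) ?_
  · exact (Finset.disjoint_biUnion_right _ _ _).2 fun s hs ↦
      hdisj (Finset.ne_of_mem_erase hs).symm
  · gcongr
    exact Finset.card_le_univ _
  · rwa [huniv, Finset.card_univ]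

theorem HasUniformPaving.exists_fin {r : ℕ} (h : HasUniformPaving A n b Finset.univ) (hn : 0 < n)
    (hι : Fintype.card ι = r * n) :
    ∃ S : Fin r → Finset ι, (∀ k l, k ≠ l → Disjoint (S k) (S l)) ∧ (∀ i, ∃ k, i ∈ S k) ∧
      ∀ k, (S k).card = n ∧ FormLE A (S k) b := by
  obtain ⟨P, hP⟩ := h
  have hr : P.parts.card = r := by
    rw [← Finset.card_univ, ← P.sum_card_parts, Finset.sum_congr rfl fun T hT ↦ (hP T hT).1,
      Finset.sum_const, smul_eq_mul] at hι
    exact Nat.eq_of_mul_eq_mul_right hn hι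
  let e := (P.parts.equivFinOfCardEq hr).symm
  refine ⟨fun k ↦ e k, fun k l hkl ↦ ?_, fun i ↦ ?_, fun k ↦ hP _ (e k).2⟩
  · exact P.disjoint (e k).2 (e l).2 fun h ↦ hkl (e.injective (Subtype.ext h))
  · obtain ⟨T, hT, hi⟩ := P.exists_mem (Finset.mem_univ i)
    exact ⟨e.symm ⟨T, hT⟩, by simpa using hi⟩

end UniformPaving

section Eigenvalue

open Matrix

variable {ι : Type*} [Fintype ι] {A : Matrix ι ι ℂ} {S : Finset ι}

theorem dotProduct_extend_subtype_val (v : ι → ℂ) (x : S → ℂ) :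
    v ⬝ᵥ Function.extend Subtype.val x 0 = (fun i : S ↦ v i) ⬝ᵥ x := by
  have hzero : ∀ i ∉ S, Function.extend (Subtype.val : S → ι) x 0 i = 0 := fun i hi ↦
    Function.extend_apply' _ _ _ fun ⟨j, hj⟩ ↦ hi (hj ▸ j.2)
  rw [dotProduct, ← Finset.sum_subset S.subset_univ fun i _ hi ↦ by rw [hzero i hi, mul_zero],
    ← Finset.sum_coe_sort S]
  simp only [Subtype.val_injective.extend_apply, dotProduct]

theorem star_extend_subtype_val_dotProduct (x : S → ℂ) (v : ι → ℂ) :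
    star (Function.extend Subtype.val x 0) ⬝ᵥ v = star x ⬝ᵥ fun i : S ↦ v i := by
  rw [star_dotProduct, dotProduct_extend_subtype_val, star_dotProduct x]
  rfl

theorem FormLE.re_star_dotProduct_submatrix_mulVec_le {b : ℝ} (h : FormLE A S b) (x : S → ℂ) :
    (star x ⬝ᵥ (A.submatrix Subtype.val Subtype.val *ᵥ x)).re ≤ b * sqNorm x := by
  set u : ι → ℂ := Function.extend Subtype.val x 0 with hu
  have hsupport : Function.support u ⊆ S := fun i hi ↦ by
    by_contra hiS
    exact hi (Function.extend_apply' _ _ _ fun ⟨j, hj⟩ ↦ hiS (hj ▸ j.2))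
  have hform : star u ⬝ᵥ (A *ᵥ u) = star x ⬝ᵥ (A.submatrix Subtype.val Subtype.val *ᵥ x) := by
    rw [hu, star_extend_subtype_val_dotProduct]
    congr 1
    ext i
    exact dotProduct_extend_subtype_val _ _
  have hnorm : sqNorm u = sqNorm x := by
    refine Complex.ofReal_injective ?_
    rw [← star_dotProduct_self, ← star_dotProduct_self, hu, star_extend_subtype_val_dotProduct]
    simp only [Subtype.val_injective.extend_apply]
  simpa only [hform, hnorm] using h u hsupport

theorem FormLE.re_le_of_isRoot [DecidableEq ι] {b : ℝ} (h : FormLE A S b) {z : ℂ}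
    (hz : (A.submatrix (Subtype.val : S → ι) Subtype.val).charpoly.IsRoot z) : z.re ≤ b := by
  rw [Polynomial.IsRoot, eval_charpoly] at hz
  obtain ⟨x, hx, hx0⟩ := exists_mulVec_eq_zero_iff.2 hz
  rw [sub_mulVec, sub_eq_zero, scalar_apply, ← smul_one_eq_diagonal, smul_mulVec, one_mulVec]
    at hx0
  have hle := h.re_star_dotProduct_submatrix_mulVec_le x
  rw [← hx0, dotProduct_smul, star_dotProduct_self, smul_eq_mul, Complex.re_mul_ofReal] at hle
  exact le_of_mul_le_mul_right hle (sqNorm_pos hx)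

end Eigenvalue

section EqualSizedPaving

open Matrix

variable {ι : Type*} [Fintype ι] [DecidableEq ι] {A : Matrix ι ι ℂ}

theorem formLE_one (hAc : (1 - A).PosSemidef) (S : Finset ι) : FormLE A S 1 := fun u _ ↦ by
  have hnonneg := (Complex.nonneg_iff.1 (hAc.dotProduct_mulVec_nonneg u)).1
  rw [sub_mulVec, one_mulVec, dotProduct_sub, star_dotProduct_self, Complex.sub_re,
    Complex.ofReal_re] at hnonneg
  linarith

theorem paving_constant_le {α s k : ℝ} (hα : 0 ≤ α) (hs : 0 < s) (h : 4 * s + α < 1)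
    (hk : 1 / (2 * s ^ 2) ≤ k) : α + 1 / k + (1 + α) / √k + s ≤ 4 * s + α := by
  have hk0 : 0 < k := hk.trans_lt' (by positivity)
  have hinv : 1 / k ≤ 2 * s ^ 2 := (one_div_le (by positivity) hk0).1 hk
  have hsqrt : 1 / √k ≤ 3 / 2 * s := by
    rw [← Real.sqrt_one, ← Real.sqrt_div zero_le_one]
    exact Real.sqrt_le_iff.2 ⟨by positivity, by nlinarith⟩
  have hmul : (1 + α) / √k ≤ (2 - 4 * s) * (3 / 2 * s) := by
    rw [div_eq_mul_one_div]
    exact mul_le_mul (by linarith) hsqrt (by positivity) (by linarith)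
  nlinarith

theorem hasUniformPaving_univ (hA : A.PosSemidef) (hAc : (1 - A).PosSemidef) {r n : ℕ}
    (hn : 0 < n) (hι : Fintype.card ι = r * n) {α s : ℝ} (hα : 0 ≤ α)
    (hdiag : ∀ i, (A i i).re ≤ α) (hs : 0 < s) (hrs : r * s ^ 4 = 1) :
    HasUniformPaving A n (4 * s + α) Finset.univ := by
  have hdvd : n ∣ Fintype.card ι := hι ▸ dvd_mul_left n r
  rcases le_or_gt 1 (4 * s + α) with h | h
  · exact ((formLE_one hAc Finset.univ).mono subset_rfl h).hasUniformPaving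
      (by rwa [Finset.card_univ])
  set E : ℝ := 1 / s ^ 2 with hE
  have hE0 : 0 < E := by positivity
  have hE16 : 16 ≤ E := by
    rw [hE, le_div_iff₀ (by positivity)]
    nlinarith
  have hr : (r : ℝ) = E ^ 2 := by
    rw [hE, _root_.one_div_pow, ← pow_mul, eq_div_iff (by positivity), hrs]
  set k := ⌈E / 2⌉₊
  have hk : E / 2 ≤ k := Nat.le_ceil _
  have hk' : (k : ℝ) < E / 2 + 1 := Nat.ceil_lt_add_one (by positivity)
  have : Nonempty (Fin k) := ⟨⟨0, Nat.ceil_pos.2 (by positivity)⟩⟩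
  obtain ⟨f, hf⟩ := exists_coloring_formLE (K := Fin k) hA hAc hα hdiag
  have hcount : (k : ℝ) * (n * (E + k)) ≤ Fintype.card ι := by
    rw [hι, Nat.cast_mul, hr, mul_left_comm, mul_comm (E ^ 2)]
    gcongr
    nlinarith
  refine (hasUniformPaving_univ_of_coloring hA hAc hn hdvd hE0 hf (by simpa using hcount)).mono ?_
  rw [Fintype.card_fin, hE, one_div_one_div, Real.sqrt_sq hs.le]
  refine paving_constant_le hα hs h (hk.trans_eq' ?_)
  rw [hE, div_div, mul_comm]

end EqualSizedPaving

theorem equal_sized_paving_bound_general {ι : Type*} [Fintype ι] [DecidableEq ι] {r n : ℕ}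
    (hr : 1 ≤ r) (hn : 1 ≤ n) (hι : Fintype.card ι = r * n) (A : Matrix ι ι ℂ)
    (hA : A.PosSemidef) (hAc : (1 - A).PosSemidef) (α : ℝ) (hα : 0 ≤ α)
    (hdiag : ∀ i, (A i i).re ≤ α) :
    ∃ S : Fin r → Finset ι,
      (∀ k l, k ≠ l → Disjoint (S k) (S l)) ∧
      (∀ i, ∃ k, i ∈ S k) ∧
      (∀ k, (S k).card = n) ∧
      ∀ k, ∀ z : ℂ,
        (A.submatrix (Subtype.val : S k → ι) (Subtype.val : S k → ι)).charpoly.IsRoot z →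
        z.re ≤ 4 * (r : ℝ) ^ (-(1 : ℝ) / 4) + α := by
  have hr0 : (0 : ℝ) < r := Nat.cast_pos.2 hr
  have hpow : r * ((r : ℝ) ^ (-(1 : ℝ) / 4)) ^ 4 = 1 := by
    rw [← Real.rpow_natCast, ← Real.rpow_mul hr0.le, Nat.cast_ofNat,
      div_mul_cancel₀ _ four_ne_zero, Real.rpow_neg_one, mul_inv_cancel₀ hr0.ne']
  have hpaving := hasUniformPaving_univ hA hAc hn hι hα hdiag (Real.rpow_pos_of_pos hr0 _) hpow
  obtain ⟨S, hdisj, hcover, hS⟩ := hpaving.exists_fin hn hι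
  exact ⟨S, hdisj, hcover, fun k ↦ (hS k).1, fun k _ hz ↦ (hS k).2.re_le_of_isRoot hz⟩

/-- **Equal-sized paving bound.** Every PSD contraction in `M_{rn}(ℂ)` with diagonal
entries at most `α` has an `r`-paving into blocks all of size exactly `n`, each with
largest eigenvalue at most `4·r^{-1/4} + α`. -/
theorem equal_sized_paving_bound {r n : ℕ} (hr : 1 ≤ r) (hn : 1 ≤ n)
    (A : Matrix (Fin (r * n)) (Fin (r * n)) ℂ)
    (hA : A.PosSemidef) (hAc : (1 - A).PosSemidef)
    (α : ℝ) (hα : 0 ≤ α) (hdiag : ∀ i, (A i i).re ≤ α) :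
    ∃ S : Fin r → Finset (Fin (r * n)),
      (∀ k l, k ≠ l → Disjoint (S k) (S l)) ∧
      (∀ i : Fin (r * n), ∃ k, i ∈ S k) ∧
      (∀ k, (S k).card = n) ∧
      ∀ k, ∀ z : ℂ, ((subMat A (S k)).charpoly).IsRoot z →
        z.re ≤ 4 * (r : ℝ) ^ (-(1 : ℝ) / 4) + α :=
  equal_sized_paving_bound_general hr hn (Fintype.card_fin _) A hA hAc α hα hdiag
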